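/- arXiv:2503.21678 — 11 statements merged into one kernel-verified Lean document; each statement's English description precedes it below -/
import Mathlib

section
/- Let I ⊆ ℝ be a nonempty open interval, let f : I → ℝ be continuous, and let n ∈ ℕ∪{0}. Fix a nonnegative C^∞ function h : ℝ → ℝ with h(u) = 0 for u ∉ (−1,1) and ∫_{−1}^1 h(t) dt = 1, and for ε > 0 set h_ε(t) := (1/ε)·h(t/ε), I_ε := (I−ε) ∩ (I+ε), and f_ε(t) := ∫_{−ε}^{ε} f(t−s) h_ε(s) ds for t ∈ I_ε. If f is n-increasing on I, then for every ε > 0 the function f_ε is n-increasing on I_ε. -/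
open MeasureTheory Set

/-- Integral of `f` over the set `A` with respect to the (automatically bounded) signed
Borel measure `μ`, defined via the Jordan decomposition. -/
noncomputable def sInt (μ : MeasureTheory.SignedMeasure ℝ) (A : Set ℝ) (f : ℝ → ℝ) : ℝ :=
  (∫ t in A, f t ∂μ.toJordanDecomposition.posPart) -
  (∫ t in A, f t ∂μ.toJordanDecomposition.negPart)

/-- `μ_k(τ) = ∫_{[0,1]} (t-τ)^k dμ(t)` (with the convention `0^0 = 1`). -/
noncomputable def muK (μ : MeasureTheory.SignedMeasure ℝ) (k : ℕ) (τ : ℝ) : ℝ :=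
  sInt μ (Icc 0 1) (fun t => (t - τ) ^ k)

/-- `μ_k^-(τ) = ∫_{[0,τ)} (t-τ)^k dμ(t)`. -/
noncomputable def muMinus (μ : MeasureTheory.SignedMeasure ℝ) (k : ℕ) (τ : ℝ) : ℝ :=
  sInt μ (Ico 0 τ) (fun t => (t - τ) ^ k)

/-- `μ_k^+(τ) = ∫_{(τ,1]} (t-τ)^k dμ(t)`. -/
noncomputable def muPlus (μ : MeasureTheory.SignedMeasure ℝ) (k : ℕ) (τ : ℝ) : ℝ :=
  sInt μ (Ioc τ 1) (fun t => (t - τ) ^ k)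

/-- The `n`th-order divided difference of `f` at the points `x 0, …, x n`. -/
noncomputable def divDiff (f : ℝ → ℝ) (n : ℕ) (x : Fin (n + 1) → ℝ) : ℝ :=
  ∑ j : Fin (n + 1), f (x j) / ∏ i ∈ Finset.univ.erase j, (x j - x i)

/-- `f` is `n`-increasing on `I`: all `n`th-order divided differences at pairwise
distinct points of `I` are nonnegative. -/
def nIncreasingOn (f : ℝ → ℝ) (I : Set ℝ) (n : ℕ) : Prop :=
  ∀ x : Fin (n + 1) → ℝ, Function.Injective x → (∀ j, x j ∈ I) → 0 ≤ divDiff f n x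

/-- `f` is `n`-decreasing on `I` if `-f` is `n`-increasing on `I`. -/
def nDecreasingOn (f : ℝ → ℝ) (I : Set ℝ) (n : ℕ) : Prop :=
  nIncreasingOn (fun u => -f u) I n

/-- `φ⁺_{p,n}(u) = ((u-p)_+)^n` for `n ≥ 1`, and `φ⁺_{p,0}` is the characteristic
function of `(p,∞)`. -/
noncomputable def phiPlus (p : ℝ) (n : ℕ) (u : ℝ) : ℝ :=
  if n = 0 then (if p < u then 1 else 0) else (max 0 (u - p)) ^ n

/-- `φ⁻_{p,n}(u) = ((u-p)_−)^n` for `n ≥ 1`, and `φ⁻_{p,0}` is the characteristic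
function of `(−∞,p)`. -/
noncomputable def phiMinus (p : ℝ) (n : ℕ) (u : ℝ) : ℝ :=
  if n = 0 then (if u < p then 1 else 0) else (max 0 (p - u)) ^ n

/- The set `J(p)` associated with an interval `I` and a point `p ∈ ℝ`:
`(−∞, (p − inf I)/(sup I − inf I))` if `p ≤ inf I` (interpreted as `(−∞,0)` when `I` is
unbounded above), `ℝ` if `p ∈ I`, and `(1 + (p − sup I)/(sup I − inf I), ∞)` if
`p ≥ sup I` (interpreted as `(1,∞)` when `I` is unbounded below). -/
open scoped Classical in
noncomputable def Jset (I : Set ℝ) (p : ℝ) : Set ℝ :=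
  if p ∈ I then Set.univ
  else if p ∈ lowerBounds I then
    (if BddAbove I then Set.Iio ((p - sInf I) / (sSup I - sInf I)) else Set.Iio 0)
  else
    (if BddBelow I then Set.Ioi (1 + (p - sSup I) / (sSup I - sInf I)) else Set.Ioi 1)

theorem stmt2 (I : Set ℝ) (hIo : IsOpen I) (hIc : I.OrdConnected) (hIne : I.Nonempty)
    (f : ℝ → ℝ) (hf : ContinuousOn f I) (n : ℕ)
    (h : ℝ → ℝ) (hpos : ∀ u, 0 ≤ h u) (hsmooth : ContDiff ℝ (⊤ : ℕ∞) h)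
    (hsupp : ∀ u, u ∉ Ioo (-1 : ℝ) 1 → h u = 0)
    (hint : (∫ t in (-1 : ℝ)..1, h t) = 1)
    (ε : ℝ) (hε : 0 < ε)
    (hinc : nIncreasingOn f I n) :
    nIncreasingOn (fun t => ∫ s in (-ε)..ε, f (t - s) * ((1 / ε) * h (s / ε)))
      {t : ℝ | t + ε ∈ I ∧ t - ε ∈ I} n := by
  intro x hx hxI
  have key : ∀ j, ∀ s ∈ Icc (-ε) ε, x j - s ∈ I := by
    intro j s hs
    have h1 := hxI j
    simp only [Set.mem_setOf_eq] at h1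
    exact hIc.out h1.2 h1.1 ⟨by linarith [hs.2], by linarith [hs.1]⟩
  have hle : -ε ≤ ε := by linarith
  have hhc : Continuous h := hsmooth.continuous
  have hii : ∀ j : Fin (n + 1), IntervalIntegrable
      (fun s => f (x j - s) * ((1 / ε) * h (s / ε)) / ∏ i ∈ Finset.univ.erase j, (x j - x i))
      volume (-ε) ε := by
    intro j
    apply ContinuousOn.intervalIntegrable
    rw [Set.uIcc_of_le hle]
    have h1 : ContinuousOn (fun s => f (x j - s)) (Icc (-ε) ε) :=
      hf.comp (by fun_prop) (fun s hs => key j s hs)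
    have h2 : Continuous (fun s => (1 / ε) * h (s / ε)) := by fun_prop
    exact (h1.mul h2.continuousOn).div_const _
  unfold divDiff
  simp only [← intervalIntegral.integral_div]
  rw [← intervalIntegral.integral_finset_sum (fun j _ => hii j)]
  apply intervalIntegral.integral_nonneg hle
  intro s hs
  have h3 := hinc (fun j => x j - s) (fun a b hab => hx (by simpa using hab))
    (fun j => key j s hs)
  unfold divDiff at h3
  simp only [sub_sub_sub_cancel_right] at h3
  have h4 : 0 ≤ (1 / ε) * h (s / ε) := mul_nonneg (by positivity) (hpos _)
  have h5 := mul_nonneg h3 h4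
  rw [Finset.sum_mul] at h5
  simpa only [div_mul_eq_mul_div] using h5
end

section
/- Let I ⊆ ℝ be a nonempty open interval, n ∈ ℕ, μ a bounded signed Borel measure on [0,1], and λ ∈ [0,1]. Let f : I → ℝ be continuous such that: (a) for every k ∈ {0,…,n−1}, the function μ_k(λ)·f is k-increasing on I; and (b) either (i) f is n-increasing on I, μ_{n−1}^-(τ) ≤ 0 for all τ ∈ [0,λ), and μ_{n−1}^+(τ) ≥ 0 for all τ ∈ (λ,1], or (ii) f is n-decreasing on I, μ_{n−1}^-(τ) ≥ 0 for all τ ∈ [0,λ), and μ_{n−1}^+(τ) ≤ 0 for all τ ∈ (λ,1]. Then ∫_{[0,1]} f((1−t)x + t y) dμ(t) ≥ 0 for all x, y ∈ I with x < y. -/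
open MeasureTheory Set

open scoped fwdDiff in
lemma aux_fwd_mvt (n : ℕ) : ∀ (g : ℝ → ℝ), ContDiff ℝ n g → ∀ (h : ℝ), 0 < h → ∀ x : ℝ,
    ∃ ξ ∈ Icc x (x + n * h), (fwdDiff h)^[n] g x = h ^ n * iteratedDeriv n g ξ := by
  induction n with
  | zero => intro g hg h hh x; exact ⟨x, by simp, by simp⟩
  | succ n ih =>
    intro g hg h hh x
    have hgn : ContDiff ℝ n g := hg.of_le (by norm_cast; omega)
    have h1 : ContDiff ℝ n (fun y => g (y + h)) := hgn.comp (by fun_prop)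
    have h2 : ContDiff ℝ n (fwdDiff h g) := h1.sub hgn
    obtain ⟨ξ, hξ, he⟩ := ih _ h2 h hh x
    have h3 : iteratedDeriv n (fwdDiff h g) ξ = iteratedDeriv n g (ξ + h) - iteratedDeriv n g ξ := by
      have : fwdDiff h g = (fun y => g (y + h)) - g := rfl
      rw [this, iteratedDeriv_sub h1.contDiffAt hgn.contDiffAt]
      rw [iteratedDeriv_comp_add_const]
    have hd : Differentiable ℝ (iteratedDeriv n g) :=
      hg.differentiable_iteratedDeriv n (by norm_cast; omega)
    obtain ⟨c, hc, hc'⟩ := exists_deriv_eq_slope (iteratedDeriv n g) (show ξ < ξ + h by linarith)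
      hd.continuous.continuousOn hd.differentiableOn
    refine ⟨c, ⟨by linarith [hξ.1, hc.1], ?_⟩, ?_⟩
    · push_cast; linarith [hξ.2, hc.2]
    · rw [Function.iterate_succ_apply, he, h3, iteratedDeriv_succ, hc']
      rw [add_sub_cancel_left]
      field_simp
      ring

lemma aux_prod (j : ℕ) (n : ℕ) (hjn : j ≤ n) :
    ∏ i ∈ (Finset.range (n + 1)).erase j, ((j : ℝ) - i)
      = (-1) ^ (n - j) * (j.factorial * (n - j).factorial) := by
  induction n, hjn using Nat.le_induction with
  | base =>
    have : (Finset.range (j + 1)).erase j = Finset.range j := by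
      ext a; simp; omega
    rw [this, ← Finset.prod_range_reflect]
    simp
    rw [← Finset.prod_range_add_one_eq_factorial]
    push_cast
    apply Finset.prod_congr rfl
    intro i hi
    rw [Finset.mem_range] at hi
    rw [show j - 1 - i = j - (i + 1) by omega, Nat.cast_sub (by omega)]
    push_cast; ring
  | succ n hn ih =>
    have : (Finset.range (n + 1 + 1)).erase j = insert (n+1) ((Finset.range (n + 1)).erase j) := by
      ext a; simp; omega
    rw [this, Finset.prod_insert (by simp), ih, show n + 1 - j = (n - j) + 1 by omega,
      Nat.factorial_succ]
    push_cast
    rw [Nat.cast_sub hn]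
    ring

open scoped fwdDiff in
lemma aux_divDiff (f : ℝ → ℝ) (n : ℕ) (z h : ℝ) (hh : 0 < h) :
    (fwdDiff h)^[n] f z = (n.factorial * h ^ n) * divDiff f n (fun j => z + (j : ℕ) * h) := by
  rw [fwdDiff_iter_eq_sum_shift, divDiff, Finset.mul_sum, Finset.sum_range]
  apply Finset.sum_congr rfl
  intro j _
  have hj : (j : ℕ) ≤ n := by omega
  have h1 : ∏ i ∈ Finset.univ.erase j, ((z + ((j : ℕ) : ℝ) * h) - (z + ((i : ℕ) : ℝ) * h))
      = h ^ n * ((-1) ^ (n - (j : ℕ)) * ((j : ℕ).factorial * (n - (j : ℕ)).factorial)) := by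
    rw [← aux_prod j n hj]
    have h2 : ∏ i ∈ Finset.univ.erase j, ((z + ((j : ℕ) : ℝ) * h) - (z + ((i : ℕ) : ℝ) * h))
      = ∏ i ∈ Finset.univ.erase j, (h * (((j : ℕ) : ℝ) - ((i : ℕ) : ℝ))) :=
      Finset.prod_congr rfl fun i _ => by ring
    rw [h2, Finset.prod_mul_distrib]
    congr 1
    · simp
    · refine Finset.prod_bij (fun i _ => (i : ℕ)) ?_ ?_ ?_ ?_
      · intro a ha
        simp at ha ⊢
        exact ⟨fun h => ha (Fin.ext h), by omega⟩
      · intro a _ b _ h; exact Fin.ext h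
      · intro b hb
        simp at hb
        refine ⟨⟨b, by omega⟩, ?_, rfl⟩
        simp
        intro h; exact hb.1 (by rw [← h])
      · intros; rfl
  rw [h1]
  have hc : ((n.choose j : ℕ) : ℝ) * ((j : ℕ).factorial * (n - (j : ℕ)).factorial) = n.factorial := by
    rw [← mul_assoc]; exact_mod_cast Nat.choose_mul_factorial_mul_factorial hj
  rw [← hc]
  have e : ((-1 : ℝ) ^ (n - (j : ℕ))) * ((-1 : ℝ) ^ (n - (j : ℕ))) = 1 := by
    rw [← mul_pow]; simp
  have e0 : ((-1 : ℝ) ^ (n - (j : ℕ))) ≠ 0 := by simp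
  have f1 : (((j : ℕ).factorial : ℕ) : ℝ) ≠ 0 := by positivity
  have f2 : (((n - (j : ℕ)).factorial : ℕ) : ℝ) ≠ 0 := by positivity
  simp only [zsmul_eq_mul, nsmul_eq_mul]
  push_cast
  field_simp
  rw [pow_two, e]; ring

open scoped fwdDiff in
lemma aux_fwd_nonneg {f : ℝ → ℝ} {I : Set ℝ} {k : ℕ} (hI : I.OrdConnected) {c : ℝ}
    (hf : nIncreasingOn (fun u => c * f u) I k) {z h : ℝ} (hh : 0 < h) (hz : z ∈ I)
    (hz' : z + k * h ∈ I) : 0 ≤ c * (fwdDiff h)^[k] f z := by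
  have h1 := fwdDiff_iter_const_smul h c f k
  have h2 : c * (fwdDiff h)^[k] f z = (fwdDiff h)^[k] (fun u => c * f u) z := (congrFun h1 z).symm
  rw [h2, aux_divDiff _ _ _ _ hh]
  refine mul_nonneg (by positivity) (hf _ ?_ ?_)
  · intro a b hab
    have : ((a : ℕ) : ℝ) * h = ((b : ℕ) : ℝ) * h := by simpa using hab
    have := mul_right_cancel₀ hh.ne' this
    exact Fin.ext (by exact_mod_cast this)
  · intro j
    refine hI.out hz hz' ⟨?_, ?_⟩
    · have : 0 ≤ ((j : ℕ) : ℝ) * h := by positivity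
      simpa using this
    · have : ((j : ℕ) : ℝ) ≤ k := by exact_mod_cast (by omega : (j : ℕ) ≤ k)
      gcongr

open scoped fwdDiff in
lemma aux_deriv_nonneg {G : ℝ → ℝ} {k : ℕ} (hG : ContDiff ℝ k G) {c a b z : ℝ}
    (hz : z ∈ Ico a b)
    (h : ∀ h, 0 < h → z + k * h ≤ b → 0 ≤ c * (fwdDiff h)^[k] G z) :
    0 ≤ c * iteratedDeriv k G z := by
  by_contra hcon
  push Not at hcon
  have hc : Continuous (fun u => c * iteratedDeriv k G u) :=
    continuous_const.mul (hG.continuous_iteratedDeriv k le_rfl)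
  obtain ⟨ε, hε, hε'⟩ := Metric.eventually_nhds_iff.1 (hc.continuousAt.eventually_lt
    (continuousAt_const (y := (0:ℝ))) hcon)
  set d := min (ε / 2) (b - z) with hd
  have hdp : 0 < d := lt_min (by linarith) (by linarith [hz.2])
  set h0 := d / (k + 1) with hh0
  have hh : 0 < h0 := by positivity
  have hk : k * h0 ≤ d := by
    rw [hh0, ← mul_div_assoc, div_le_iff₀ (by positivity)]; nlinarith
  obtain ⟨ξ, hξ, he⟩ := aux_fwd_mvt k G hG h0 hh z
  have h1 := h h0 hh (by linarith [min_le_right (ε / 2) (b - z)])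
  have h2 : c * iteratedDeriv k G ξ < 0 := by
    apply hε'
    rw [Real.dist_eq, abs_of_nonneg (by linarith [hξ.1])]
    linarith [min_le_left (ε / 2) (b - z), hξ.2]
  rw [he] at h1
  have : 0 < h0 ^ k := by positivity
  nlinarith

/-- The Peano-type kernel of the Taylor remainder at `lam`. -/
noncomputable def auxK (lam : ℝ) (m : ℕ) (t s : ℝ) : ℝ :=
  if lam < s ∧ s < t then (t - s) ^ m else if s < lam ∧ t < s then -(t - s) ^ m else 0

/-- The kernel integrated against a measure. -/
noncomputable def auxW (p : Measure ℝ) (lam : ℝ) (m : ℕ) (s : ℝ) : ℝ :=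
  ∫ t in Icc (0:ℝ) 1, auxK lam m t s ∂p

lemma auxK_meas (lam : ℝ) (m : ℕ) : Measurable (fun z : ℝ × ℝ => auxK lam m z.1 z.2) := by
  unfold auxK
  refine Measurable.ite ?_ (by fun_prop) (Measurable.ite ?_ (by fun_prop) (by fun_prop))
  · exact (measurableSet_lt measurable_const measurable_snd).inter
      (measurableSet_lt measurable_snd measurable_fst)
  · exact (measurableSet_lt measurable_snd measurable_const).inter
      (measurableSet_lt measurable_fst measurable_snd)

lemma auxK_bound (lam : ℝ) (m : ℕ) {t s : ℝ} (ht : t ∈ Icc (0:ℝ) 1) (hs : s ∈ Icc (0:ℝ) 1) :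
    |auxK lam m t s| ≤ 1 := by
  have h : |t - s| ^ m ≤ 1 := pow_le_one₀ (abs_nonneg _)
    (abs_le.2 ⟨by linarith [ht.1, hs.2], by linarith [ht.2, hs.1]⟩)
  unfold auxK
  split_ifs
  · rwa [abs_pow]
  · rwa [abs_neg, abs_pow]
  · simp

lemma auxW_right (p : Measure ℝ) {lam : ℝ} (m : ℕ) {s : ℝ} (h : lam < s) (h0 : 0 ≤ s) :
    auxW p lam m s = ∫ t in Ioc s 1, (t - s) ^ m ∂p := by
  unfold auxW
  rw [setIntegral_eq_of_subset_of_forall_sdiff_eq_zero (s := Ioc s 1) measurableSet_Icc]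
  · refine setIntegral_congr_fun measurableSet_Ioc fun t ht => ?_
    simp [auxK, h, ht.1]
  · intro t ht; exact ⟨by linarith [ht.1], ht.2⟩
  · intro t ht
    have : ¬ s < t := fun h' => ht.2 ⟨h', ht.1.2⟩
    simp [auxK, this, h.not_gt]

lemma auxW_left (p : Measure ℝ) {lam : ℝ} (m : ℕ) {s : ℝ} (h : s < lam) (h0 : s ≤ 1) :
    auxW p lam m s = -∫ t in Ico 0 s, (t - s) ^ m ∂p := by
  unfold auxW
  rw [setIntegral_eq_of_subset_of_forall_sdiff_eq_zero (s := Ico 0 s) measurableSet_Icc,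
    ← integral_neg]
  · refine setIntegral_congr_fun measurableSet_Ico fun t ht => ?_
    simp [auxK, h, ht.2, h.not_gt]
  · intro t ht; exact ⟨ht.1, by linarith [ht.2]⟩
  · intro t ht
    have : ¬ t < s := fun h' => ht.2 ⟨ht.1.1, h'⟩
    simp [auxK, this, h.not_gt]

lemma auxW_self (p : Measure ℝ) (lam : ℝ) (m : ℕ) : auxW p lam m lam = 0 := by
  simp [auxW, auxK]

lemma aux_taylor {G : ℝ → ℝ} {m : ℕ} (hG : ContDiff ℝ (m + 1 : ℕ) G) {lam : ℝ}
    (hlam : lam ∈ Icc (0:ℝ) 1) {t : ℝ} (ht : t ∈ Icc (0:ℝ) 1) :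
    G t = (∑ k ∈ Finset.range (m + 1), ((k.factorial : ℝ)⁻¹ * iteratedDeriv k G lam) * (t - lam) ^ k)
      + (m.factorial : ℝ)⁻¹ * ∫ s in Icc (0:ℝ) 1, auxK lam m t s * iteratedDeriv (m + 1) G s := by
  rcases eq_or_ne lam t with rfl | hne
  · have h1 : ∀ s, auxK lam m lam s = 0 := by
      intro s
      have : ¬ (lam < s ∧ s < lam) := fun h => lt_asymm h.1 h.2
      have : ¬ (s < lam ∧ lam < s) := fun h => lt_asymm h.1 h.2
      simp [auxK, *]
    simp [h1, Finset.sum_range_succ']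
  have hu : UniqueDiffOn ℝ (uIcc lam t) := uniqueDiffOn_uIcc hne
  have key := taylor_integral_remainder (x := t) (x₀ := lam) (n := m) hG.contDiffOn
  rw [sub_eq_iff_eq_add'] at key
  rw [key, taylor_within_apply]
  congr 1
  · refine Finset.sum_congr rfl fun k hk => ?_
    rw [iteratedDerivWithin_eq_iteratedDeriv hu
      (hG.of_le (by norm_cast; exact (Finset.mem_range.1 hk).le)).contDiffAt left_mem_uIcc]
    simp; ring
  · have h1 : ∫ s in lam..t, ((t - s) ^ m / m.factorial) •
        iteratedDerivWithin (m + 1) G (uIcc lam t) s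
        = ∫ s in lam..t, (m.factorial : ℝ)⁻¹ * ((t - s) ^ m * iteratedDeriv (m + 1) G s) := by
      refine intervalIntegral.integral_congr fun s hs => ?_
      rw [iteratedDerivWithin_eq_iteratedDeriv hu hG.contDiffAt hs]
      simp; ring
    rw [h1, intervalIntegral.integral_const_mul]
    congr 1
    rcases lt_or_gt_of_ne hne with h | h
    · rw [intervalIntegral.integral_of_le h.le, integral_Ioc_eq_integral_Ioo]
      rw [setIntegral_eq_of_subset_of_forall_sdiff_eq_zero (s := Ioo lam t) (t := Icc 0 1)
        measurableSet_Icc]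
      · refine setIntegral_congr_fun measurableSet_Ioo fun s hs => ?_
        simp [auxK, hs.1, hs.2]
      · intro s hs; exact ⟨by linarith [hs.1, hlam.1], by linarith [hs.2, ht.2]⟩
      · intro s hs
        have h1 : ¬ (lam < s ∧ s < t) := hs.2
        have h2 : ¬ (s < lam ∧ t < s) := fun h' => by linarith [h'.1, h'.2]
        simp [auxK, h1, h2]
    · rw [intervalIntegral.integral_of_ge h.le, integral_Ioc_eq_integral_Ioo, ← integral_neg]
      rw [setIntegral_eq_of_subset_of_forall_sdiff_eq_zero (s := Ioo t lam) (t := Icc 0 1)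
        measurableSet_Icc]
      · refine setIntegral_congr_fun measurableSet_Ioo fun s hs => ?_
        simp [auxK, hs.1, hs.2, hs.2.not_gt]
      · intro s hs; exact ⟨by linarith [hs.1, ht.1], by linarith [hs.2, hlam.2]⟩
      · intro s hs
        have h1 : ¬ (s < lam ∧ t < s) := fun h' => hs.2 ⟨h'.2, h'.1⟩
        have h2 : ¬ (lam < s ∧ s < t) := fun h' => by linarith [h'.1, h'.2]
        simp [auxK, h1, h2]

lemma aux_repr (p : Measure ℝ) [IsFiniteMeasure p] {G : ℝ → ℝ} {m : ℕ}
    (hG : ContDiff ℝ (m + 1 : ℕ) G) {lam : ℝ} (hlam : lam ∈ Icc (0:ℝ) 1) :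
    IntegrableOn (fun s => auxW p lam m s * iteratedDeriv (m + 1) G s) (Icc (0:ℝ) 1) ∧
    ∫ t in Icc (0:ℝ) 1, G t ∂p =
      (∑ k ∈ Finset.range (m + 1), ((k.factorial : ℝ)⁻¹ * iteratedDeriv k G lam) *
        ∫ t in Icc (0:ℝ) 1, (t - lam) ^ k ∂p)
      + (m.factorial : ℝ)⁻¹ * ∫ s in Icc (0:ℝ) 1, auxW p lam m s * iteratedDeriv (m + 1) G s := by
  have hDc : Continuous (iteratedDeriv (m + 1) G) := hG.continuous_iteratedDeriv _ le_rfl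
  obtain ⟨C, hC⟩ := isCompact_Icc.exists_bound_of_continuousOn (s := Icc (0:ℝ) 1) hDc.continuousOn
  have hint : Integrable (fun z : ℝ × ℝ => auxK lam m z.1 z.2 * iteratedDeriv (m + 1) G z.2)
      ((p.restrict (Icc (0:ℝ) 1)).prod (volume.restrict (Icc (0:ℝ) 1))) := by
    refine Integrable.of_bound (C := C) ?_ ?_
    · exact ((auxK_meas lam m).mul (hDc.measurable.comp measurable_snd)).aestronglyMeasurable
    · rw [Measure.prod_restrict]
      refine ae_restrict_of_forall_mem (measurableSet_Icc.prod measurableSet_Icc) fun z hz => ?_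
      rw [norm_mul]
      have h1 : ‖auxK lam m z.1 z.2‖ ≤ 1 := auxK_bound lam m hz.1 hz.2
      have h2 := hC z.2 hz.2
      nlinarith [norm_nonneg (auxK lam m z.1 z.2), norm_nonneg (iteratedDeriv (m + 1) G z.2)]
  have hW : ∀ s, auxW p lam m s * iteratedDeriv (m + 1) G s
      = ∫ t in Icc (0:ℝ) 1, auxK lam m t s * iteratedDeriv (m + 1) G s ∂p := by
    intro s; rw [integral_mul_const]; rfl
  have hi2 := hint.integral_prod_left
  have hi1 := hint.integral_prod_right
  refine ⟨?_, ?_⟩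
  · simp only [hW]; exact hi1
  · rw [setIntegral_congr_fun measurableSet_Icc (fun t ht => aux_taylor hG hlam ht)]
    have hpow : ∀ k, Integrable (fun t : ℝ => (t - lam) ^ k) (p.restrict (Icc (0:ℝ) 1)) :=
      fun k => ContinuousOn.integrableOn_compact isCompact_Icc (by fun_prop)
    rw [integral_add, integral_finsetSum, integral_const_mul]
    · congr 1
      · refine Finset.sum_congr rfl fun k _ => ?_
        rw [integral_const_mul]
      · simp only [hW]
        rw [integral_integral_swap hint]
    · intro k _; exact (hpow k).const_mul _
    · exact integrable_finsetSum _ fun k _ => (hpow k).const_mul _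
    · exact hi2.const_mul _

lemma aux_core (p q : Measure ℝ) [IsFiniteMeasure p] [IsFiniteMeasure q] {G : ℝ → ℝ} {m : ℕ}
    (hG : ContDiff ℝ (m + 1 : ℕ) G) {lam : ℝ} (hlam : lam ∈ Icc (0:ℝ) 1) (σ : ℝ) (hσ : σ * σ = 1)
    (hk : ∀ k < m + 1, 0 ≤ ((∫ t in Icc (0:ℝ) 1, (t - lam) ^ k ∂p) -
      (∫ t in Icc (0:ℝ) 1, (t - lam) ^ k ∂q)) * iteratedDeriv k G lam)
    (hD : ∀ t ∈ Icc (0:ℝ) 1, 0 ≤ σ * iteratedDeriv (m + 1) G t)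
    (hm : ∀ τ ∈ Ico (0:ℝ) lam, σ * ((∫ t in Ico 0 τ, (t - τ) ^ m ∂p) -
      (∫ t in Ico 0 τ, (t - τ) ^ m ∂q)) ≤ 0)
    (hp : ∀ τ ∈ Ioc lam (1:ℝ), 0 ≤ σ * ((∫ t in Ioc τ 1, (t - τ) ^ m ∂p) -
      (∫ t in Ioc τ 1, (t - τ) ^ m ∂q))) :
    0 ≤ (∫ t in Icc (0:ℝ) 1, G t ∂p) - (∫ t in Icc (0:ℝ) 1, G t ∂q) := by
  obtain ⟨ip, ep⟩ := aux_repr p hG hlam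
  obtain ⟨iq, eq⟩ := aux_repr q hG hlam
  have h1 : 0 ≤ ∑ k ∈ Finset.range (m + 1), ((k.factorial : ℝ)⁻¹ * iteratedDeriv k G lam) *
      ((∫ t in Icc (0:ℝ) 1, (t - lam) ^ k ∂p) - (∫ t in Icc (0:ℝ) 1, (t - lam) ^ k ∂q)) := by
    refine Finset.sum_nonneg fun k hk' => ?_
    have := mul_nonneg (show 0 ≤ (k.factorial : ℝ)⁻¹ by positivity) (hk k (Finset.mem_range.1 hk'))
    linarith
  have h2 : 0 ≤ ∫ s in Icc (0:ℝ) 1, (auxW p lam m s * iteratedDeriv (m + 1) G s -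
      auxW q lam m s * iteratedDeriv (m + 1) G s) := by
    refine setIntegral_nonneg measurableSet_Icc fun s hs => ?_
    have h3 : 0 ≤ σ * (auxW p lam m s - auxW q lam m s) := by
      rcases lt_trichotomy s lam with h | h | h
      · rw [auxW_left p m h hs.2, auxW_left q m h hs.2]
        linarith [hm s ⟨hs.1, h⟩]
      · subst h; simp [auxW_self]
      · rw [auxW_right p m h hs.1, auxW_right q m h hs.1]
        exact hp s ⟨h, hs.2⟩
    have h4 := mul_nonneg h3 (hD s hs)
    have : auxW p lam m s * iteratedDeriv (m + 1) G s - auxW q lam m s * iteratedDeriv (m + 1) G s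
      = (σ * σ) * ((auxW p lam m s - auxW q lam m s) * iteratedDeriv (m + 1) G s) := by
      rw [hσ]; ring
    rw [this]; linarith
  rw [integral_sub ip iq] at h2
  rw [ep, eq]
  have h5 := mul_nonneg (show 0 ≤ (m.factorial : ℝ)⁻¹ by positivity) h2
  simp only [mul_sub, Finset.sum_sub_distrib] at h1 h5
  linarith

open scoped Convolution in
/-- Mollification of `F` by a smooth bump function. -/
noncomputable def auxConv (φ : ContDiffBump (0:ℝ)) (F : ℝ → ℝ) : ℝ → ℝ :=
  (φ.normed volume) ⋆[ContinuousLinearMap.lsmul ℝ ℝ, volume] F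

lemma auxConv_apply (φ : ContDiffBump (0:ℝ)) (F : ℝ → ℝ) (z : ℝ) :
    auxConv φ F z = ∫ t, φ.normed volume t * F (z - t) := rfl

lemma auxConv_contDiff (φ : ContDiffBump (0:ℝ)) {F : ℝ → ℝ} (hF : Continuous F) (n : ℕ) :
    ContDiff ℝ n (auxConv φ F) :=
  HasCompactSupport.contDiff_convolution_left (n := (n : ℕ∞)) _ φ.hasCompactSupport_normed
    φ.contDiff_normed hF.locallyIntegrable

lemma auxConv_int (φ : ContDiffBump (0:ℝ)) {F : ℝ → ℝ} (hF : Continuous F) (z : ℝ) :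
    Integrable (fun t => φ.normed volume t * F (z - t)) := by
  refine Continuous.integrable_of_hasCompactSupport ?_ ?_
  · exact φ.continuous_normed.mul (hF.comp (by fun_prop))
  · exact φ.hasCompactSupport_normed.mul_right

lemma auxConv_fwd (φ : ContDiffBump (0:ℝ)) (h : ℝ) (k : ℕ) : ∀ {F : ℝ → ℝ}, Continuous F →
    (fwdDiff h)^[k] (auxConv φ F) = auxConv φ ((fwdDiff h)^[k] F) := by
  induction k with
  | zero => intro F _; rfl
  | succ k ih =>
    intro F hF
    have hF' : Continuous (fwdDiff h F) := by
      have : fwdDiff h F = fun y => F (y + h) - F y := rfl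
      rw [this]; fun_prop
    rw [Function.iterate_succ_apply, Function.iterate_succ_apply, ← ih hF']
    congr 1
    ext z
    rw [auxConv_apply, fwdDiff, auxConv_apply, auxConv_apply,
      ← integral_sub (auxConv_int φ hF _) (auxConv_int φ hF _)]
    refine integral_congr_ae (.of_forall fun t => ?_)
    simp only [fwdDiff]
    rw [show z + h - t = z - t + h by ring]; ring

lemma auxConv_fwd_nonneg (φ : ContDiffBump (0:ℝ)) {F : ℝ → ℝ} (hF : Continuous F) {k : ℕ}
    {c z h : ℝ} (hs : ∀ t, |t| < φ.rOut → 0 ≤ c * (fwdDiff h)^[k] F (z - t)) :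
    0 ≤ c * (fwdDiff h)^[k] (auxConv φ F) z := by
  rw [auxConv_fwd φ h k hF, auxConv_apply, ← integral_const_mul]
  refine integral_nonneg fun t => ?_
  show 0 ≤ c * (φ.normed volume t * (fwdDiff h)^[k] F (z - t))
  by_cases ht : |t| < φ.rOut
  · have := mul_nonneg (φ.nonneg_normed (μ := volume) t) (hs t ht)
    linarith
  · have : φ.normed volume t = 0 := by
      by_contra hne
      have hm : t ∈ Function.support (φ.normed volume) := hne
      rw [φ.support_normed_eq] at hm
      simp at hm; exact ht hm
    simp [this]

lemma aux_main (p q : Measure ℝ) [IsFiniteMeasure p] [IsFiniteMeasure q] {F : ℝ → ℝ} {m : ℕ}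
    (hF : Continuous F) {M : ℝ} (hM : ∀ t, |F t| ≤ M) {ε : ℝ} (hε : 0 < ε)
    {lam : ℝ} (hlam : lam ∈ Icc (0:ℝ) 1) (σ : ℝ) (hσ : σ * σ = 1)
    (hk : ∀ k < m + 1, ∀ z h, 0 < h → -ε ≤ z → z + k * h ≤ 1 + ε →
      0 ≤ ((∫ t in Icc (0:ℝ) 1, (t - lam) ^ k ∂p) -
      (∫ t in Icc (0:ℝ) 1, (t - lam) ^ k ∂q)) * (fwdDiff h)^[k] F z)
    (hD : ∀ z h, 0 < h → -ε ≤ z → z + (m + 1 : ℕ) * h ≤ 1 + ε → 0 ≤ σ * (fwdDiff h)^[m + 1] F z)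
    (hm : ∀ τ ∈ Ico (0:ℝ) lam, σ * ((∫ t in Ico 0 τ, (t - τ) ^ m ∂p) -
      (∫ t in Ico 0 τ, (t - τ) ^ m ∂q)) ≤ 0)
    (hp : ∀ τ ∈ Ioc lam (1:ℝ), 0 ≤ σ * ((∫ t in Ioc τ 1, (t - τ) ^ m ∂p) -
      (∫ t in Ioc τ 1, (t - τ) ^ m ∂q))) :
    0 ≤ (∫ t in Icc (0:ℝ) 1, F t ∂p) - (∫ t in Icc (0:ℝ) 1, F t ∂q) := by
  let φ : ℕ → ContDiffBump (0:ℝ) := fun i =>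
    { rIn := ε / 4 * (1 / ((i:ℝ) + 1))
      rOut := ε / 2 * (1 / ((i:ℝ) + 1))
      rIn_pos := by positivity
      rIn_lt_rOut := by
        have : (0:ℝ) < 1 / ((i:ℝ) + 1) := by positivity
        nlinarith }
  have hr : ∀ i, (φ i).rOut ≤ ε / 2 := by
    intro i
    show ε / 2 * (1 / ((i:ℝ) + 1)) ≤ ε / 2
    have : 1 / ((i:ℝ) + 1) ≤ 1 := by
      rw [div_le_one (by positivity)]; linarith [(Nat.cast_nonneg i : (0:ℝ) ≤ i)]
    nlinarith
  have hrt : Filter.Tendsto (fun i => (φ i).rOut) Filter.atTop (nhds 0) := by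
    have := (tendsto_one_div_add_atTop_nhds_zero_nat (𝕜 := ℝ)).const_mul (ε / 2)
    simpa [φ] using this
  have hlim : ∀ t, Filter.Tendsto (fun i => auxConv (φ i) F t) Filter.atTop (nhds (F t)) :=
    fun t => ContDiffBump.convolution_tendsto_right_of_continuous hrt hF t
  have hbd : ∀ i t, ‖auxConv (φ i) F t‖ ≤ 3 * M := by
    intro i t
    have h1 : dist (auxConv (φ i) F t) (F t) ≤ 2 * M :=
      ContDiffBump.dist_normed_convolution_le (φ := φ i) hF.aestronglyMeasurable (fun s _ => by
        rw [Real.dist_eq]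
        have := abs_sub (F s) (F t)
        linarith [hM s, hM t])
    rw [Real.dist_eq] at h1
    have := hM t
    rw [Real.norm_eq_abs]
    rw [abs_le] at *
    constructor <;> linarith [h1.1, h1.2, this.1, this.2]
  have hfin : ∀ (r : Measure ℝ) [IsFiniteMeasure r],
      Filter.Tendsto (fun i => ∫ t in Icc (0:ℝ) 1, auxConv (φ i) F t ∂r) Filter.atTop
        (nhds (∫ t in Icc (0:ℝ) 1, F t ∂r)) := by
    intro r _
    refine tendsto_integral_of_dominated_convergence (fun _ => 3 * M) ?_ (integrable_const _) ?_ ?_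
    · intro i
      exact (auxConv_contDiff (φ i) hF 0).continuous.aestronglyMeasurable
    · intro i; exact .of_forall (hbd i)
    · exact .of_forall hlim
  refine ge_of_tendsto' ((hfin p).sub (hfin q)) fun i => ?_
  have hsh : ∀ t, |t| < (φ i).rOut → |t| < ε / 2 := fun t ht => ht.trans_le (hr i)
  refine aux_core p q (auxConv_contDiff (φ i) hF (m + 1)) hlam σ hσ ?_ ?_ hm hp
  · intro k hk'
    refine aux_deriv_nonneg (auxConv_contDiff (φ i) hF k) (a := 0) (b := 1 + ε / 2)
      ⟨hlam.1, by linarith [hlam.2]⟩ fun h hh hb => auxConv_fwd_nonneg (φ i) hF fun t ht => ?_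
    have := abs_lt.1 (hsh t ht)
    exact hk k hk' _ h hh (by linarith [hlam.1]) (by linarith)
  · intro z hz
    refine aux_deriv_nonneg (auxConv_contDiff (φ i) hF (m + 1)) (a := 0) (b := 1 + ε / 2)
      ⟨hz.1, by linarith [hz.2]⟩ fun h hh hb => auxConv_fwd_nonneg (φ i) hF fun t ht => ?_
    have := abs_lt.1 (hsh t ht)
    exact hD _ h hh (by linarith [hz.1]) (by linarith)

theorem stmt3 (I : Set ℝ) (hIo : IsOpen I) (hIc : I.OrdConnected) (hIne : I.Nonempty)
    (n : ℕ) (hn : 1 ≤ n) (μ : MeasureTheory.SignedMeasure ℝ)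
    (lam : ℝ) (hlam : lam ∈ Icc (0:ℝ) 1)
    (f : ℝ → ℝ) (hf : ContinuousOn f I)
    (ha : ∀ k < n, nIncreasingOn (fun u => muK μ k lam * f u) I k)
    (hb : (nIncreasingOn f I n ∧ (∀ τ ∈ Ico (0:ℝ) lam, muMinus μ (n - 1) τ ≤ 0) ∧
            (∀ τ ∈ Ioc lam (1:ℝ), 0 ≤ muPlus μ (n - 1) τ)) ∨
          (nDecreasingOn f I n ∧ (∀ τ ∈ Ico (0:ℝ) lam, 0 ≤ muMinus μ (n - 1) τ) ∧
            (∀ τ ∈ Ioc lam (1:ℝ), muPlus μ (n - 1) τ ≤ 0))) :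
    ∀ x ∈ I, ∀ y ∈ I, x < y →
      0 ≤ sInt μ (Icc 0 1) (fun t => f ((1 - t) * x + t * y)) := by
  intro x hx y hy hxy
  obtain ⟨m, rfl⟩ : ∃ m, n = m + 1 := ⟨n - 1, by omega⟩
  have hyx : 0 < y - x := by linarith
  -- room around `[x, y]`
  obtain ⟨ε, hε, ha1, hb1⟩ : ∃ ε : ℝ, 0 < ε ∧ x - ε * (y - x) ∈ I ∧ y + ε * (y - x) ∈ I := by
    obtain ⟨d, hd, hd'⟩ := Metric.isOpen_iff.1 hIo x hx
    obtain ⟨e, he, he'⟩ := Metric.isOpen_iff.1 hIo y hy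
    have hmin : 0 < min d e := lt_min hd he
    refine ⟨min d e / 2 / (y - x), by positivity, hd' ?_, he' ?_⟩
    · rw [div_mul_cancel₀ _ hyx.ne', Metric.mem_ball, Real.dist_eq, abs_lt]
      constructor <;> linarith [min_le_left d e]
    · rw [div_mul_cancel₀ _ hyx.ne', Metric.mem_ball, Real.dist_eq, abs_lt]
      constructor <;> linarith [min_le_right d e]
  set a := x - ε * (y - x) with ha_def
  set b := y + ε * (y - x) with hb_def
  have hab : a ≤ b := by
    have : 0 < ε * (y - x) := by positivity
    linarith
  have hclamp : ∀ u, max a (min b u) ∈ Icc a b := fun u => ⟨le_max_left _ _, by simp [hab]⟩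
  have hsub : Icc a b ⊆ I := hIc.out ha1 hb1
  let F : ℝ → ℝ := fun t => f (max a (min b (x + t * (y - x))))
  have hF : Continuous F := hf.comp_continuous (by fun_prop) fun t => hsub (hclamp _)
  obtain ⟨M, hM⟩ := isCompact_Icc.exists_bound_of_continuousOn (hf.mono hsub)
  have hFM : ∀ t, |F t| ≤ M := fun t => hM _ (hclamp _)
  have hFeq : ∀ t, -ε ≤ t → t ≤ 1 + ε → F t = f (x + t * (y - x)) := by
    intro t h1 h2
    have e1 : a ≤ x + t * (y - x) := by nlinarith
    have e2 : x + t * (y - x) ≤ b := by nlinarith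
    show f (max a (min b (x + t * (y - x)))) = _
    rw [min_eq_right e2, max_eq_right e1]
  have hFfwd : ∀ (k : ℕ) (z h : ℝ), 0 < h → -ε ≤ z → z + k * h ≤ 1 + ε →
      (fwdDiff h)^[k] F z = (fwdDiff (h * (y - x)))^[k] f (x + z * (y - x)) := by
    intro k z h hh h1 h2
    rw [fwdDiff_iter_eq_sum_shift, fwdDiff_iter_eq_sum_shift]
    refine Finset.sum_congr rfl fun j hj => ?_
    have hj' : (j : ℝ) ≤ k := by exact_mod_cast Nat.lt_succ_iff.1 (Finset.mem_range.1 hj)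
    have e1 : 0 ≤ (j : ℝ) * h := by positivity
    have e2 : (j : ℝ) * h ≤ k * h := by gcongr
    simp only [nsmul_eq_mul]
    rw [hFeq _ (by linarith) (by linarith)]
    congr 2; ring
  have hsign : ∀ (k : ℕ) (c : ℝ), nIncreasingOn (fun u => c * f u) I k →
      ∀ z h, 0 < h → -ε ≤ z → z + k * h ≤ 1 + ε → 0 ≤ c * (fwdDiff h)^[k] F z := by
    intro k c hc z h hh h1 h2
    rw [hFfwd k z h hh h1 h2]
    have e1 : 0 ≤ (k : ℝ) * h := by positivity
    refine aux_fwd_nonneg hIc hc (by positivity) (hsub ⟨by nlinarith, by nlinarith⟩)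
      (hsub ⟨?_, ?_⟩)
    · have : 0 ≤ (k : ℝ) * h * (y - x) := by positivity
      nlinarith
    · nlinarith
  have hgoal : sInt μ (Icc 0 1) (fun t => f ((1 - t) * x + t * y)) = sInt μ (Icc 0 1) F := by
    have : ∀ t ∈ Icc (0:ℝ) 1, f ((1 - t) * x + t * y) = F t := by
      intro t ht
      rw [hFeq t (by linarith [ht.1]) (by linarith [ht.2])]
      congr 1; ring
    unfold sInt
    rw [setIntegral_congr_fun measurableSet_Icc this, setIntegral_congr_fun measurableSet_Icc this]
  rw [hgoal]
  have hfin := fun σ (hσ : σ * σ = 1) => aux_main μ.toJordanDecomposition.posPart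
    μ.toJordanDecomposition.negPart (m := m) hF hFM hε hlam σ hσ
    (fun k hk => hsign k _ (ha k hk))
  rcases hb with ⟨h1, h2, h3⟩ | ⟨h1, h2, h3⟩
  · refine hfin 1 (by norm_num) (hsign (m + 1) 1 (by simpa using h1)) ?_ ?_
    · intro τ hτ; rw [one_mul]; exact h2 τ hτ
    · intro τ hτ; rw [one_mul]; exact h3 τ hτ
  · refine hfin (-1) (by norm_num) (hsign (m + 1) (-1) (by simpa [nDecreasingOn] using h1)) ?_ ?_
    · intro τ hτ
      have := h2 τ hτ
      simp only [muMinus, sInt, Nat.add_sub_cancel] at this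
      linarith
    · intro τ hτ
      have := h3 τ hτ
      simp only [muPlus, sInt, Nat.add_sub_cancel] at this
      linarith
end

section
/- Let I ⊆ ℝ be a nonempty open interval, p ∈ ℝ, n ∈ ℕ∪{0}, and μ a bounded signed Borel measure on [0,1]. Define J(p) := (−∞, (p − inf I)/(sup I − inf I)) if p ≤ inf I; J(p) := ℝ if p ∈ I; and J(p) := (1 + (p − sup I)/(sup I − inf I), ∞) if p ≥ sup I (these formulas interpreted appropriately when I is unbounded, in which case J(p) = (−∞,0), ℝ, (1,∞) respectively). Then the function f := φ_{p,n}, restricted to I, satisfies ∫_{[0,1]} f((1−t)x + t y) dμ(t) ≥ 0 for all x, y ∈ I with x < y if and only if μ_n(λ) ≥ 0 for all λ ∈ J(p). -/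
open MeasureTheory Set

lemma aux_scale (μ : MeasureTheory.SignedMeasure ℝ) (n : ℕ) (p x y lam : ℝ)
    (h : p - x = lam * (y - x)) :
    sInt μ (Icc 0 1) (fun t => ((1 - t) * x + t * y - p) ^ n) = (y - x) ^ n * muK μ n lam := by
  have e : (fun t : ℝ => ((1 - t) * x + t * y - p) ^ n)
      = fun t => (y - x) ^ n * (t - lam) ^ n := by
    funext t
    rw [← mul_pow]
    congr 1
    linear_combination -h
  rw [e, muK, sInt, sInt, integral_const_mul, integral_const_mul, mul_sub]

lemma aux_below {I : Set ℝ} (hIo : IsOpen I) {x : ℝ} (hx : x ∈ I) : ∃ z ∈ I, z < x := by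
  obtain ⟨e, he, hb⟩ := Metric.isOpen_iff.1 hIo x hx
  refine ⟨x - e / 2, hb ?_, by linarith⟩
  rw [Metric.mem_ball, Real.dist_eq, abs_lt]; constructor <;> linarith

lemma aux_above {I : Set ℝ} (hIo : IsOpen I) {x : ℝ} (hx : x ∈ I) : ∃ z ∈ I, x < z := by
  obtain ⟨e, he, hb⟩ := Metric.isOpen_iff.1 hIo x hx
  refine ⟨x + e / 2, hb ?_, by linarith⟩
  rw [Metric.mem_ball, Real.dist_eq, abs_lt]; constructor <;> linarith

lemma aux_inf_lt {I : Set ℝ} (hIo : IsOpen I) (hb : BddBelow I) {x : ℝ} (hx : x ∈ I) :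
    sInf I < x := by
  obtain ⟨z, hz, h⟩ := aux_below hIo hx
  exact (csInf_le hb hz).trans_lt h

lemma aux_lt_sup {I : Set ℝ} (hIo : IsOpen I) (hb : BddAbove I) {x : ℝ} (hx : x ∈ I) :
    x < sSup I := by
  obtain ⟨z, hz, h⟩ := aux_above hIo hx
  exact h.trans_le (le_csSup hb hz)

lemma aux_mk {I : Set ℝ} {p lam h : ℝ} (hh : 0 < h) (hx : p - lam * h ∈ I)
    (hy : p + (1 - lam) * h ∈ I) :
    ∃ x ∈ I, ∃ y ∈ I, x < y ∧ p - x = lam * (y - x) :=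
  ⟨_, hx, _, hy, by nlinarith, by ring⟩

lemma aux_mem {I : Set ℝ} (hIc : I.OrdConnected) {z : ℝ} (h1 : ∃ u ∈ I, u < z)
    (h2 : ∃ v ∈ I, z < v) : z ∈ I := by
  obtain ⟨u, hu, hu'⟩ := h1
  obtain ⟨v, hv, hv'⟩ := h2
  exact hIc.out hu hv ⟨hu'.le, hv'.le⟩

lemma aux_J (I : Set ℝ) (hIo : IsOpen I) (hIc : I.OrdConnected) (hIne : I.Nonempty)
    (p lam : ℝ) :
    lam ∈ Jset I p ↔ ∃ x ∈ I, ∃ y ∈ I, x < y ∧ p - x = lam * (y - x) := by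
  unfold Jset
  split_ifs with hp hl hb hb
  · simp only [mem_univ, true_iff]
    obtain ⟨e, he, hb⟩ := Metric.isOpen_iff.1 hIo p hp
    have hd : 0 < |lam| + |1 - lam| + 1 := by positivity
    have h0 : 0 < e / (|lam| + |1 - lam| + 1) := by positivity
    have h1 : (|lam| + |1 - lam| + 1) * (e / (|lam| + |1 - lam| + 1)) = e := by field_simp
    generalize e / (|lam| + |1 - lam| + 1) = h at *
    refine aux_mk h0 (hb ?_) (hb ?_) <;> rw [Metric.mem_ball, Real.dist_eq]
    · rw [sub_sub_cancel_left, abs_neg, abs_mul, abs_of_pos h0]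
      nlinarith [abs_nonneg (1 - lam), mul_nonneg (abs_nonneg (1 - lam)) h0.le]
    · rw [add_sub_cancel_left, abs_mul, abs_of_pos h0]
      nlinarith [abs_nonneg lam, mul_nonneg (abs_nonneg lam) h0.le]
  · have hbb : BddBelow I := ⟨p, hl⟩
    have hpa : p ≤ sInf I := le_csInf hIne hl
    have hab : sInf I < sSup I := by
      obtain ⟨z, hz⟩ := hIne
      exact (aux_inf_lt hIo hbb hz).trans (aux_lt_sup hIo hb hz)
    rw [mem_Iio, lt_div_iff₀ (by linarith)]
    constructor
    · intro h
      have hlam : lam < 0 := by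
        by_contra hc
        push Not at hc
        nlinarith [mul_nonneg hc (sub_pos.2 hab).le]
      have h1 : (sInf I - p) / (-lam) < (sSup I - p) / (1 - lam) := by
        rw [div_lt_div_iff₀ (by linarith) (by linarith)]
        nlinarith
      obtain ⟨r, hr1, hr2⟩ := exists_between h1
      have hr0 : 0 < r := lt_of_le_of_lt (div_nonneg (by linarith) (by linarith)) hr1
      rw [div_lt_iff₀ (by linarith)] at hr1
      rw [lt_div_iff₀ (by linarith)] at hr2
      apply aux_mk hr0
      · exact aux_mem hIc (exists_lt_of_csInf_lt hIne (by linarith))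
          (exists_lt_of_lt_csSup hIne (by linarith))
      · exact aux_mem hIc (exists_lt_of_csInf_lt hIne (by linarith))
          (exists_lt_of_lt_csSup hIne (by linarith))
    · rintro ⟨x, hx, y, hy, hxy, he⟩
      have h1 := aux_inf_lt hIo hbb hx
      have h2 := aux_lt_sup hIo hb hy
      have hlam : lam < 0 := by
        by_contra hc
        push Not at hc
        nlinarith [mul_nonneg hc (sub_pos.2 hxy).le]
      nlinarith [mul_pos (neg_pos.2 hlam) (show 0 < (sSup I - y) + (x - sInf I) by linarith)]
  · have hbb : BddBelow I := ⟨p, hl⟩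
    have hpa : p ≤ sInf I := le_csInf hIne hl
    rw [mem_Iio]
    rw [not_bddAbove_iff] at hb
    constructor
    · intro hlam
      obtain ⟨r, hr1⟩ := exists_gt ((sInf I - p) / (-lam))
      have hr0 : 0 < r := lt_of_le_of_lt (div_nonneg (by linarith) (by linarith)) hr1
      rw [div_lt_iff₀ (by linarith)] at hr1
      apply aux_mk hr0
      · exact aux_mem hIc (exists_lt_of_csInf_lt hIne (by linarith)) (hb _)
      · exact aux_mem hIc (exists_lt_of_csInf_lt hIne (by linarith)) (hb _)
    · rintro ⟨x, hx, y, hy, hxy, he⟩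
      have h1 := aux_inf_lt hIo hbb hx
      by_contra hc
      push Not at hc
      nlinarith [mul_nonneg hc (sub_pos.2 hxy).le]
  all_goals
    have hu : ∀ z ∈ I, z ≤ p := by
      intro z hz
      by_contra hc
      push Not at hc
      apply hl
      intro w hw
      by_contra hc'
      push Not at hc'
      exact hp (hIc.out hw hz ⟨hc'.le, hc.le⟩)
    have hba : BddAbove I := ⟨p, hu⟩
    have hpb : sSup I ≤ p := csSup_le hIne hu
  · have hab : sInf I < sSup I := by
      obtain ⟨z, hz⟩ := hIne
      exact (aux_inf_lt hIo hb hz).trans (aux_lt_sup hIo hba hz)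
    have hk : lam ∈ Ioi (1 + (p - sSup I) / (sSup I - sInf I)) ↔
        p - sSup I < (lam - 1) * (sSup I - sInf I) := by
      rw [mem_Ioi, ← lt_sub_iff_add_lt', div_lt_iff₀ (by linarith)]
    rw [hk]
    constructor
    · intro h
      have hlam : 1 < lam := by
        by_contra hc
        push Not at hc
        nlinarith [mul_nonneg (sub_nonneg.2 hc) (sub_pos.2 hab).le]
      have h1 : (p - sSup I) / (lam - 1) < (p - sInf I) / lam := by
        rw [div_lt_div_iff₀ (by linarith) (by linarith)]
        nlinarith
      obtain ⟨r, hr1, hr2⟩ := exists_between h1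
      have hr0 : 0 < r := lt_of_le_of_lt (div_nonneg (by linarith) (by linarith)) hr1
      rw [div_lt_iff₀ (by linarith)] at hr1
      rw [lt_div_iff₀ (by linarith)] at hr2
      apply aux_mk hr0
      · exact aux_mem hIc (exists_lt_of_csInf_lt hIne (by linarith))
          (exists_lt_of_lt_csSup hIne (by linarith))
      · exact aux_mem hIc (exists_lt_of_csInf_lt hIne (by linarith))
          (exists_lt_of_lt_csSup hIne (by linarith))
    · rintro ⟨x, hx, y, hy, hxy, he⟩
      have h1 := aux_inf_lt hIo hb hx
      have h2 := aux_lt_sup hIo hba hy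
      have hlam : 1 < lam := by
        by_contra hc
        push Not at hc
        nlinarith [mul_nonneg (sub_nonneg.2 hc) (sub_pos.2 hxy).le]
      nlinarith [mul_pos (sub_pos.2 hlam) (show 0 < (sSup I - y) + (x - sInf I) by linarith)]
  · rw [mem_Ioi]
    rw [not_bddBelow_iff] at hb
    constructor
    · intro hlam
      obtain ⟨r, hr1⟩ := exists_gt ((p - sSup I) / (lam - 1))
      have hr0 : 0 < r := lt_of_le_of_lt (div_nonneg (by linarith) (by linarith)) hr1
      rw [div_lt_iff₀ (by linarith)] at hr1
      apply aux_mk hr0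
      · exact aux_mem hIc (hb _) (exists_lt_of_lt_csSup hIne (by linarith))
      · exact aux_mem hIc (hb _) (exists_lt_of_lt_csSup hIne (by linarith))
    · rintro ⟨x, hx, y, hy, hxy, he⟩
      have h2 := aux_lt_sup hIo hba hy
      by_contra hc
      push Not at hc
      nlinarith [mul_nonneg (sub_nonneg.2 hc) (sub_pos.2 hxy).le]

theorem stmt4 (I : Set ℝ) (hIo : IsOpen I) (hIc : I.OrdConnected) (hIne : I.Nonempty)
    (p : ℝ) (n : ℕ) (μ : MeasureTheory.SignedMeasure ℝ) :
    (∀ x ∈ I, ∀ y ∈ I, x < y →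
        0 ≤ sInt μ (Icc 0 1) (fun t => ((1 - t) * x + t * y - p) ^ n)) ↔
      ∀ lam ∈ Jset I p, 0 ≤ muK μ n lam := by
  constructor
  · intro H lam hlam
    obtain ⟨x, hx, y, hy, hxy, he⟩ := (aux_J I hIo hIc hIne p lam).1 hlam
    have h := H x hx y hy hxy
    rw [aux_scale μ n p x y lam he] at h
    exact nonneg_of_mul_nonneg_right h (pow_pos (sub_pos.2 hxy) n)
  · intro H x hx y hy hxy
    have hne : y - x ≠ 0 := (sub_pos.2 hxy).ne'
    have he : p - x = ((p - x) / (y - x)) * (y - x) := by field_simp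
    rw [aux_scale μ n p x y _ he]
    exact mul_nonneg (pow_nonneg (sub_pos.2 hxy).le n)
      (H _ ((aux_J I hIo hIc hIne p _).2 ⟨x, hx, y, hy, hxy, he⟩))
end

section
/- Let I ⊆ ℝ be a nonempty open interval, p ∈ I, n ∈ ℕ∪{0}, and μ a bounded signed Borel measure on [0,1]. Then the function f := φ⁺_{p,n}, restricted to I, satisfies ∫_{[0,1]} f((1−t)x + t y) dμ(t) ≥ 0 for all x, y ∈ I with x < y if and only if both μ_n^+(λ) ≥ 0 for all λ ∈ [0,1] and μ_n(λ) ≥ 0 for all λ ∈ (−∞,0]. -/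
open MeasureTheory Set

lemma phiPlus_aff (p x y : ℝ) (n : ℕ) (hxy : x < y) (l : ℝ) (hl : p - x = l * (y - x)) (t : ℝ) :
    phiPlus p n ((1 - t) * x + t * y) =
      (y - x) ^ n * (Ioi l).indicator (fun t => (t - l) ^ n) t := by
  have h0 : 0 < y - x := by linarith
  have e : (1 - t) * x + t * y - p = (y - x) * (t - l) := by linarith
  have hiff : p < (1 - t) * x + t * y ↔ l < t := by
    rw [← sub_pos, e, mul_pos_iff_of_pos_left h0, sub_pos]
  unfold phiPlus
  by_cases h : l < t
  · rw [indicator_of_mem (show t ∈ Ioi l from h), if_pos (hiff.2 h), e, ← mul_pow]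
    rw [max_eq_right (mul_nonneg h0.le (by linarith))]
    split_ifs with hn
    · simp [hn]
    · rfl
  · rw [indicator_of_notMem (show t ∉ Ioi l from h), if_neg (fun h' => h (hiff.1 h')), e]
    rw [max_eq_left (mul_nonpos_of_nonneg_of_nonpos h0.le (by linarith))]
    split_ifs with hn
    · simp
    · simp [hn]

lemma sInt_phi (μ : MeasureTheory.SignedMeasure ℝ) (p x y : ℝ) (n : ℕ) (hxy : x < y) (l : ℝ)
    (hl : p - x = l * (y - x)) :
    sInt μ (Icc 0 1) (fun t => phiPlus p n ((1 - t) * x + t * y)) =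
      (y - x) ^ n * sInt μ (Icc 0 1 ∩ Ioi l) (fun t => (t - l) ^ n) := by
  unfold sInt
  simp_rw [phiPlus_aff p x y n hxy l hl]
  rw [integral_const_mul, integral_const_mul, setIntegral_indicator measurableSet_Ioi,
    setIntegral_indicator measurableSet_Ioi, mul_sub]

lemma inter_nonneg (l : ℝ) (h : 0 ≤ l) : Icc (0:ℝ) 1 ∩ Ioi l = Ioc l 1 := by
  ext t; simp only [mem_inter_iff, mem_Icc, mem_Ioi, mem_Ioc]
  constructor
  · rintro ⟨⟨_, b⟩, c⟩; exact ⟨c, b⟩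
  · rintro ⟨a, b⟩; exact ⟨⟨by linarith, b⟩, a⟩

lemma inter_neg (l : ℝ) (h : l < 0) : Icc (0:ℝ) 1 ∩ Ioi l = Icc 0 1 := by
  apply inter_eq_left.2
  intro t ht; exact lt_of_lt_of_le h ht.1

lemma muK_zero_eq (μ : MeasureTheory.SignedMeasure ℝ) (n : ℕ) (hn : n ≠ 0) :
    muK μ n 0 = muPlus μ n 0 := by
  have key : ∀ ν : Measure ℝ,
      ∫ t in Icc (0:ℝ) 1, (t - 0) ^ n ∂ν = ∫ t in Ioc (0:ℝ) 1, (t - 0) ^ n ∂ν := by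
    intro ν
    rw [← inter_nonneg 0 le_rfl, ← setIntegral_indicator measurableSet_Ioi]
    apply setIntegral_congr_fun measurableSet_Icc
    intro t ht
    rcases ht.1.eq_or_lt with h | h
    · subst h; simp [hn]
    · simp [h]
  unfold muK muPlus sInt
  rw [key, key]

theorem stmt6 (I : Set ℝ) (hIo : IsOpen I) (hIc : I.OrdConnected) (hIne : I.Nonempty)
    (p : ℝ) (hp : p ∈ I) (n : ℕ) (μ : MeasureTheory.SignedMeasure ℝ) :
    (∀ x ∈ I, ∀ y ∈ I, x < y →
        0 ≤ sInt μ (Icc 0 1) (fun t => phiPlus p n ((1 - t) * x + t * y))) ↔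
      ((∀ lam ∈ Icc (0:ℝ) 1, 0 ≤ muPlus μ n lam) ∧
        ∀ lam : ℝ, lam ≤ 0 → 0 ≤ muK μ n lam) := by
  constructor
  · intro H
    have key : ∀ l : ℝ, 0 ≤ sInt μ (Icc 0 1 ∩ Ioi l) (fun t => (t - l) ^ n) := by
      intro l
      obtain ⟨δ, hδ, hb⟩ := Metric.isOpen_iff.1 hIo p hp
      set ε := δ / (2 * (|l| + 1)) with hε
      have hl0 : 0 ≤ |l| := abs_nonneg l
      have hε0 : 0 < ε := by positivity
      have hεδ : (|l| + 1) * ε < δ := by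
        have : (|l| + 1) * ε = δ / 2 := by rw [hε]; field_simp
        linarith
      have a1 := le_abs_self l
      have a2 := neg_abs_le l
      have hx : p - l * ε ∈ I := by
        apply hb
        rw [Metric.mem_ball, Real.dist_eq, abs_lt]
        constructor <;> nlinarith
      have hy : p + (1 - l) * ε ∈ I := by
        apply hb
        rw [Metric.mem_ball, Real.dist_eq, abs_lt]
        constructor <;> nlinarith
      have hxy : p - l * ε < p + (1 - l) * ε := by linarith
      have h := H _ hx _ hy hxy
      rw [sInt_phi μ p _ _ n hxy l (by ring)] at h
      exact nonneg_of_mul_nonneg_right h (pow_pos (by linarith) n)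
    have h1 : ∀ lam ∈ Icc (0:ℝ) 1, 0 ≤ muPlus μ n lam := by
      intro l hl
      have := key l
      rwa [inter_nonneg l hl.1] at this
    have h2 : ∀ l : ℝ, l < 0 → 0 ≤ muK μ n l := by
      intro l hl
      have := key l
      rwa [inter_neg l hl] at this
    refine ⟨h1, fun l hl => ?_⟩
    rcases hl.lt_or_eq with h | h
    · exact h2 l h
    · subst h
      by_cases hn : n = 0
      · subst hn
        have := h2 (-1) (by norm_num)
        simpa [muK] using this
      · rw [muK_zero_eq μ n hn]
        exact h1 0 (by simp)
  · rintro ⟨h1, h2⟩ x hx y hy hxy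
    have h0 : 0 < y - x := by linarith
    have hl : p - x = (p - x) / (y - x) * (y - x) := by field_simp
    rw [sInt_phi μ p x y n hxy _ hl]
    apply mul_nonneg (pow_nonneg h0.le n)
    generalize (p - x) / (y - x) = l
    rcases lt_or_ge l 0 with h | h
    · rw [inter_neg l h]; exact h2 l h.le
    · rw [inter_nonneg l h]
      rcases le_or_gt l 1 with h' | h'
      · exact h1 l ⟨h, h'⟩
      · rw [Ioc_eq_empty (by linarith)]; simp [sInt]
end

section
/- Let I ⊆ ℝ be a nonempty open interval, p ∈ I, n ∈ ℕ∪{0}, and μ a bounded signed Borel measure on [0,1]. Then the function f := φ⁻_{p,n}, restricted to I, satisfies ∫_{[0,1]} f((1−t)x + t y) dμ(t) ≥ 0 for all x, y ∈ I with x < y if and only if both (−1)^n μ_n^-(λ) ≥ 0 for all λ ∈ [0,1] and (−1)^n μ_n(λ) ≥ 0 for all λ ∈ [1,∞). -/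
open MeasureTheory Set

theorem sInt_congr' (μ : MeasureTheory.SignedMeasure ℝ) (A : Set ℝ) (hA : MeasurableSet A)
    (f g : ℝ → ℝ) (h : ∀ t ∈ A, f t = g t) : sInt μ A f = sInt μ A g := by
  unfold sInt
  rw [setIntegral_congr_fun hA h, setIntegral_congr_fun hA h]

theorem sInt_mul (μ : MeasureTheory.SignedMeasure ℝ) (A : Set ℝ)
    (c : ℝ) (f : ℝ → ℝ) : sInt μ A (fun t => c * f t) = c * sInt μ A f := by
  unfold sInt
  rw [integral_const_mul, integral_const_mul, mul_sub]

theorem sInt_ind (μ : MeasureTheory.SignedMeasure ℝ) (l : ℝ) (hl : l ≤ 1)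
    (f : ℝ → ℝ) : sInt μ (Icc 0 1) ((Ico 0 l).indicator f) = sInt μ (Ico 0 l) f := by
  unfold sInt
  have h : Icc (0:ℝ) 1 ∩ Ico 0 l = Ico 0 l :=
    inter_eq_right.mpr fun t ht => ⟨ht.1, ht.2.le.trans hl⟩
  rw [setIntegral_indicator measurableSet_Ico, setIntegral_indicator measurableSet_Ico, h]

theorem phi_eq (x y l : ℝ) (n : ℕ) (t : ℝ) (h : x < y) :
    phiMinus (x + l * (y - x)) n ((1 - t) * x + t * y) =
      if t < l then ((y - x) ^ n * (-1) ^ n) * (t - l) ^ n else 0 := by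
  have e : (x + l * (y - x)) - ((1 - t) * x + t * y) = (y - x) * (l - t) := by ring
  have hpos : 0 < y - x := sub_pos.mpr h
  have hiff : (1 - t) * x + t * y < x + l * (y - x) ↔ t < l := by
    rw [← sub_pos, e, mul_pos_iff_of_pos_left hpos, sub_pos]
  unfold phiMinus
  simp only [hiff]
  rw [e]
  by_cases hn : n = 0
  · subst hn; simp
  · rw [if_neg hn]
    split_ifs with ht
    · rw [max_eq_right (mul_nonneg hpos.le (sub_nonneg.mpr ht.le)), ← mul_pow, ← mul_pow]
      congr 1; ring
    · rw [max_eq_left (mul_nonpos_of_nonneg_of_nonpos hpos.le (by linarith)), zero_pow hn]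

theorem int_low (μ : MeasureTheory.SignedMeasure ℝ) (x y l : ℝ) (n : ℕ) (h : x < y)
    (hl : l ≤ 1) :
    sInt μ (Icc 0 1) (fun t => phiMinus (x + l * (y - x)) n ((1 - t) * x + t * y)) =
      (y - x) ^ n * ((-1) ^ n * muMinus μ n l) := by
  unfold muMinus
  rw [← mul_assoc, ← sInt_mul, ← sInt_ind μ l hl]
  refine sInt_congr' _ _ measurableSet_Icc _ _ fun t ht => ?_
  rw [phi_eq _ _ _ _ _ h, indicator_apply]
  simp [ht.1]

theorem int_high (μ : MeasureTheory.SignedMeasure ℝ) (x y l : ℝ) (n : ℕ) (h : x < y)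
    (hl : 1 < l ∨ (n ≠ 0 ∧ 1 ≤ l)) :
    sInt μ (Icc 0 1) (fun t => phiMinus (x + l * (y - x)) n ((1 - t) * x + t * y)) =
      (y - x) ^ n * ((-1) ^ n * muK μ n l) := by
  unfold muK
  rw [← mul_assoc, ← sInt_mul]
  refine sInt_congr' _ _ measurableSet_Icc _ _ fun t ht => ?_
  rw [phi_eq _ _ _ _ _ h]
  split_ifs with h1
  · rfl
  · rcases hl with hl | ⟨hn, hl⟩
    · exact absurd (ht.2.trans_lt hl) h1
    · have : t - l = 0 := by linarith [ht.2]
      rw [this, zero_pow hn, mul_zero]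

theorem exists_pts (I : Set ℝ) (hIo : IsOpen I) (p : ℝ) (hp : p ∈ I) (l : ℝ) :
    ∃ x ∈ I, ∃ y ∈ I, x < y ∧ p = x + l * (y - x) := by
  obtain ⟨e, he, hb⟩ := Metric.isOpen_iff.mp hIo p hp
  have hD : 0 < 1 + |l| := by positivity
  have key : ∀ c : ℝ, |c| ≤ 1 + |l| → p + e / 2 / (1 + |l|) * c ∈ I := by
    intro c hc
    apply hb
    rw [Metric.mem_ball, Real.dist_eq, add_sub_cancel_left, abs_mul,
      abs_of_pos (by positivity : 0 < e / 2 / (1 + |l|))]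
    calc e / 2 / (1 + |l|) * |c| ≤ e / 2 / (1 + |l|) * (1 + |l|) := by gcongr
      _ = e / 2 := by field_simp
      _ < e := by linarith
  have hd : 0 < e / 2 / (1 + |l|) := by positivity
  refine ⟨_, key (-l) (by rw [abs_neg]; linarith), _, key (1 - l) ?_, ?_, by ring⟩
  · exact (abs_sub _ _).trans (by simp)
  · nlinarith

theorem stmt7 (I : Set ℝ) (hIo : IsOpen I) (hIc : I.OrdConnected) (hIne : I.Nonempty)
    (p : ℝ) (hp : p ∈ I) (n : ℕ) (μ : MeasureTheory.SignedMeasure ℝ) :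
    (∀ x ∈ I, ∀ y ∈ I, x < y →
        0 ≤ sInt μ (Icc 0 1) (fun t => phiMinus p n ((1 - t) * x + t * y))) ↔
      ((∀ lam ∈ Icc (0:ℝ) 1, 0 ≤ (-1 : ℝ) ^ n * muMinus μ n lam) ∧
        ∀ lam : ℝ, 1 ≤ lam → 0 ≤ (-1 : ℝ) ^ n * muK μ n lam) := by
  constructor
  · intro H
    refine ⟨fun l hl => ?_, fun l hl => ?_⟩
    · obtain ⟨x, hx, y, hy, h, rfl⟩ := exists_pts I hIo p hp l
      have := H x hx y hy h
      rw [int_low μ x y l n h hl.2] at this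
      exact nonneg_of_mul_nonneg_right this (pow_pos (sub_pos.mpr h) n)
    · have main : ∀ m : ℝ, (1 < m ∨ (n ≠ 0 ∧ 1 ≤ m)) → 0 ≤ (-1 : ℝ) ^ n * muK μ n m := by
        intro m hm
        obtain ⟨x, hx, y, hy, h, rfl⟩ := exists_pts I hIo p hp m
        have := H x hx y hy h
        rw [int_high μ x y m n h hm] at this
        exact nonneg_of_mul_nonneg_right this (pow_pos (sub_pos.mpr h) n)
      by_cases hn : n = 0
      · have h2 := main 2 (Or.inl one_lt_two)
        subst hn
        simpa [muK] using h2
      · exact main l (Or.inr ⟨hn, hl⟩)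
  · rintro ⟨H1, H2⟩ x hx y hy h
    have hpos : 0 < y - x := sub_pos.mpr h
    obtain ⟨l, rfl⟩ : ∃ l, p = x + l * (y - x) :=
      ⟨(p - x) / (y - x), by field_simp; ring⟩
    rcases le_or_gt l 1 with hl | hl
    · rw [int_low μ x y l n h hl]
      refine mul_nonneg (pow_pos hpos n).le ?_
      rcases le_or_gt 0 l with h0 | h0
      · exact H1 l ⟨h0, hl⟩
      · simp [muMinus, sInt, Ico_eq_empty_of_le h0.le]
    · rw [int_high μ x y l n h (Or.inl hl)]
      exact mul_nonneg (pow_pos hpos n).le (H2 l hl.le)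
end

section
/- Let I ⊆ ℝ be a nonempty open interval, p ∈ ℝ with p ≤ inf I, and n, k ∈ ℕ∪{0} with 0 ≤ k < n. Then the function φ_{p,n}(u) = (u−p)^n is k-increasing on I but not k-decreasing on I. -/
open MeasureTheory Set

lemma dd_zero (s : Finset ℝ) (hs : 2 ≤ s.card) :
    ∑ j ∈ s, (j:ℝ) ^ 0 / ∏ i ∈ s.erase j, (j - i) = 0 := by
  classical
  have h := Lagrange.coeff_eq_sum (s := s) (v := fun x : ℝ => x) (fun a _ b _ h => h)
    (P := (1 : Polynomial ℝ)) (by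
      rw [Polynomial.degree_one]
      exact_mod_cast (by omega : 0 < s.card))
  simp only [Polynomial.eval_one, Polynomial.coeff_one] at h
  rw [if_neg (by omega)] at h
  simpa using h.symm

lemma dd_rec (s : Finset ℝ) (a : ℝ) (ha : a ∉ s) (n : ℕ) :
    ∑ j ∈ insert a s, (j:ℝ) ^ (n+1) / ∏ i ∈ (insert a s).erase j, (j - i) =
    a * (∑ j ∈ insert a s, (j:ℝ) ^ n / ∏ i ∈ (insert a s).erase j, (j - i)) +
      ∑ j ∈ s, (j:ℝ) ^ n / ∏ i ∈ s.erase j, (j - i) := by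
  rw [Finset.sum_insert ha, Finset.sum_insert ha, mul_add, Finset.mul_sum, add_assoc,
    ← Finset.sum_add_distrib]
  congr 1
  · ring
  · refine Finset.sum_congr rfl fun j hj => ?_
    have hja : j ≠ a := fun h => ha (h ▸ hj)
    have h1 : (insert a s).erase j = insert a (s.erase j) :=
      Finset.erase_insert_of_ne hja.symm
    have h2 : a ∉ s.erase j := fun h => ha (Finset.mem_of_mem_erase h)
    rw [h1, Finset.prod_insert h2]
    have h3 : j - a ≠ 0 := sub_ne_zero.2 hja
    have h4 : ∏ i ∈ s.erase j, (j - i) ≠ 0 :=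
      Finset.prod_ne_zero_iff.2 fun i hi => sub_ne_zero.2 (Finset.ne_of_mem_erase hi).symm
    field_simp
    ring

lemma dd_pos (s : Finset ℝ) (hs : s.Nonempty) : (∀ x ∈ s, 0 < x) → ∀ n : ℕ,
    0 ≤ ∑ j ∈ s, (j:ℝ) ^ n / ∏ i ∈ s.erase j, (j - i) ∧
    (s.card ≤ n + 1 → 0 < ∑ j ∈ s, (j:ℝ) ^ n / ∏ i ∈ s.erase j, (j - i)) := by
  induction hs using Finset.Nonempty.cons_induction with
  | singleton a =>
    intro h n
    have : 0 < a ^ n := pow_pos (h a (by simp)) n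
    simp [this, this.le]
  | cons a s ha hs ih =>
    intro h n
    rw [Finset.cons_eq_insert] at h ⊢
    have ih := ih fun x hx => h x (Finset.mem_insert_of_mem hx)
    have hc : (insert a s).card = s.card + 1 := Finset.card_insert_of_notMem ha
    have hs1 := hs.card_pos
    have hapos := h a (Finset.mem_insert_self _ _)
    induction n with
    | zero =>
      refine ⟨(dd_zero _ (by omega)).ge, fun h' => by omega⟩
    | succ n ihn =>
      rw [dd_rec s a ha n]
      have := mul_nonneg hapos.le ihn.1
      exact ⟨add_nonneg this (ih n).1, fun h' => add_pos_of_nonneg_of_pos this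
        ((ih n).2 (by omega))⟩

lemma divDiff_pos (p : ℝ) (n k : ℕ) (hkn : k < n) (x : Fin (k+1) → ℝ)
    (hx : Function.Injective x) (hp : ∀ j, p < x j) :
    0 < divDiff (fun u => (u - p) ^ n) k x := by
  have hy : Function.Injective (fun j => x j - p) := fun a b h => hx (by simpa using h)
  have h := (dd_pos (Finset.univ.image (fun j => x j - p)) (by simp)
    (by simpa using hp) n).2 (by
      rw [Finset.card_image_of_injective _ hy]; simp; omega)
  rw [Finset.sum_image (fun a _ b _ h => hy h)] at h
  unfold divDiff
  convert h using 3 with j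
  have : (Finset.univ.image (fun j => x j - p)).erase (x j - p)
      = (Finset.univ.erase j).image (fun j => x j - p) :=
    (Finset.image_erase hy Finset.univ j).symm
  rw [this, Finset.prod_image (fun a _ b _ h => hy h)]
  simp

theorem stmt8 (I : Set ℝ) (hIo : IsOpen I) (hIc : I.OrdConnected) (hIne : I.Nonempty)
    (p : ℝ) (hp : p ∈ lowerBounds I) (n k : ℕ) (hkn : k < n) :
    nIncreasingOn (fun u => (u - p) ^ n) I k ∧
      ¬ nDecreasingOn (fun u => (u - p) ^ n) I k := by
  have hlt : ∀ x ∈ I, p < x := by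
    intro x hx
    refine lt_of_le_of_ne (hp hx) ?_
    rintro rfl
    obtain ⟨e, he, hb⟩ := Metric.isOpen_iff.1 hIo p hx
    have : p - e / 2 ∈ I := hb (by
      rw [Metric.mem_ball, Real.dist_eq, abs_lt]; constructor <;> linarith)
    have := hp this
    linarith
  refine ⟨fun x hx hxI => (divDiff_pos p n k hkn x hx fun j => hlt _ (hxI j)).le, fun hd => ?_⟩
  obtain ⟨a, ha⟩ := hIne
  have hinf : I.Infinite := infinite_of_mem_nhds a (hIo.mem_nhds ha)
  let g := hinf.natEmbedding
  let x : Fin (k+1) → ℝ := fun j => (g j : ℝ)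
  have hx : Function.Injective x := fun i j h => Fin.ext (g.injective (Subtype.ext h))
  have hxI : ∀ j, x j ∈ I := fun j => (g j).2
  have h1 := divDiff_pos p n k hkn x hx fun j => hlt _ (hxI j)
  have h2 := hd x hx hxI
  have h3 : divDiff (fun u => -(u - p) ^ n) k x = - divDiff (fun u => (u - p) ^ n) k x := by
    simp [divDiff, neg_div]
  rw [h3] at h2
  linarith
end

section
/- Let I ⊆ ℝ be a nonempty open interval, p ∈ I, and n, k ∈ ℕ∪{0} with 0 ≤ k < n and n−k even. Then the function φ_{p,n}(u) = (u−p)^n is k-increasing on I but not k-decreasing on I. -/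
open MeasureTheory Set

open Polynomial in
theorem aux_card_roots_iter (g : ℝ[X]) (k : ℕ) :
    g.roots.card ≤ (derivative^[k] g).roots.card + k := by
  induction k with
  | zero => simp
  | succ k ih =>
    rw [Function.iterate_succ_apply']
    have := Polynomial.card_roots_le_derivative (derivative^[k] g)
    omega

open Polynomial in
/-- Interpolation polynomial whose `k`-th coefficient is the divided difference. -/
theorem aux_interp (f : ℝ → ℝ) (k : ℕ) (x : Fin (k + 1) → ℝ) (hx : Function.Injective x) :
    ∃ P : ℝ[X], P.degree < ((k + 1 : ℕ) : WithBot ℕ) ∧ (∀ j, P.eval (x j) = f (x j)) ∧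
      P.coeff k = divDiff f k x ∧
      ∀ u, (derivative^[k] P).eval u = k.factorial * divDiff f k x := by
  have hinj : Set.InjOn x (Finset.univ : Finset (Fin (k + 1))) := hx.injOn
  have hdeg := Lagrange.degree_interpolate_lt (fun j => f (x j)) hinj
  have hev : ∀ j, (Lagrange.interpolate Finset.univ x (fun j => f (x j))).eval (x j) = f (x j) :=
    fun j => Lagrange.eval_interpolate_at_node (fun j => f (x j)) hinj (Finset.mem_univ j)
  refine ⟨_, by simpa using hdeg, hev, ?_, ?_⟩
  · have := Lagrange.coeff_eq_sum hinj hdeg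
    simp only [hev] at this
    simpa [divDiff] using this
  · intro u
    have := Lagrange.eval_iterate_derivative_eq_sum hinj hdeg (k := k) (by simp) u
    simp only [hev] at this
    rw [this]
    simp [divDiff]

open Polynomial in
theorem aux_incr (p : ℝ) (n k : ℕ) (hkn : k < n) (hpar : Even (n - k))
    (x : Fin (k + 1) → ℝ) (hx : Function.Injective x) :
    0 ≤ divDiff (fun u => (u - p) ^ n) k x := by
  obtain ⟨P, hdeg, hev, -, hder⟩ := aux_interp (fun u => (u - p) ^ n) k x hx
  have hdF : ((X - C p : ℝ[X]) ^ n).degree = n := by simp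
  have hne : (X - C p) ^ n - P ≠ 0 := by
    intro h
    rw [sub_eq_zero] at h
    rw [← h, hdF, Nat.cast_lt] at hdeg
    -- here `n < k + 1`
    omega
  have hsub : Finset.univ.image x ⊆ ((X - C p) ^ n - P).roots.toFinset := by
    intro y hy
    obtain ⟨j, -, rfl⟩ := Finset.mem_image.1 hy
    rw [Multiset.mem_toFinset, mem_roots hne]
    simp [hev]
  have hcard : k + 1 ≤ ((X - C p) ^ n - P).roots.card := by
    have h1 := Finset.card_le_card hsub
    rw [Finset.card_image_of_injective _ hx, Finset.card_univ, Fintype.card_fin] at h1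
    exact h1.trans (Multiset.toFinset_card_le _)
  have h2 := aux_card_roots_iter ((X - C p) ^ n - P) k
  have h3 : 0 < (derivative^[k] ((X - C p) ^ n - P)).roots.card := by omega
  obtain ⟨ξ, hξ⟩ := Multiset.card_pos_iff_exists_mem.1 h3
  have h4 := isRoot_of_mem_roots hξ
  rw [IsRoot.def, iterate_derivative_sub, eval_sub, hder, iterate_derivative_X_sub_pow,
    sub_eq_zero] at h4
  have h5 : (0 : ℝ) ≤ k.factorial * divDiff (fun u => (u - p) ^ n) k x := by
    rw [← h4]
    simp only [nsmul_eq_mul, eval_mul, eval_natCast, eval_pow, eval_sub, eval_X, eval_C]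
    exact mul_nonneg (Nat.cast_nonneg _) (hpar.pow_nonneg _)
  exact nonneg_of_mul_nonneg_right h5 (by positivity)

open Polynomial in
theorem aux_exists_ne (I : Set ℝ) (hI : I.Infinite) (p : ℝ) (n k : ℕ) (hkn : k < n) :
    ∃ x : Fin (k + 1) → ℝ, Function.Injective x ∧ (∀ j, x j ∈ I) ∧
      divDiff (fun u => (u - p) ^ n) k x ≠ 0 := by
  let e := hI.natEmbedding
  let y : Fin k → ℝ := fun j => e j
  have hy : Function.Injective y := by
    intro a b hab
    exact Fin.ext (e.injective (Subtype.ext hab))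
  have hyI : ∀ j, y j ∈ I := fun j => (e j).2
  have hinj : Set.InjOn y (Finset.univ : Finset (Fin k)) := hy.injOn
  let r : Fin k → ℝ := fun j => (y j - p) ^ n
  have hQdeg := Lagrange.degree_interpolate_lt r hinj
  have hQev : ∀ j, (Lagrange.interpolate Finset.univ y r).eval (y j) = r j :=
    fun j => Lagrange.eval_interpolate_at_node r hinj (Finset.mem_univ j)
  generalize Lagrange.interpolate Finset.univ y r = Q at hQdeg hQev
  rw [Finset.card_univ, Fintype.card_fin] at hQdeg
  have hdF : ((X - C p : ℝ[X]) ^ n).degree = n := by simp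
  have hne : (X - C p) ^ n - Q ≠ 0 := by
    intro h
    rw [sub_eq_zero] at h
    rw [← h, hdF, Nat.cast_lt] at hQdeg
    omega
  obtain ⟨z, hzI, hz⟩ := hI.exists_notMem_finset ((X - C p) ^ n - Q).roots.toFinset
  rw [Multiset.mem_toFinset, mem_roots hne] at hz
  have hzy : ∀ j, y j ≠ z := by
    rintro j rfl
    apply hz
    simp [hQev, r]
  have hx : Function.Injective (Fin.cons z y : Fin (k + 1) → ℝ) := by
    rw [Fin.cons_injective_iff]
    exact ⟨by rintro ⟨j, hj⟩; exact hzy j hj, hy⟩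
  refine ⟨Fin.cons z y, hx, ?_, ?_⟩
  · intro j
    refine Fin.cases ?_ (fun i => ?_) j
    · simpa using hzI
    · simpa using hyI i
  · intro hD
    obtain ⟨P, hPdeg, hPev, hPc, -⟩ := aux_interp (fun u => (u - p) ^ n) k _ hx
    rw [hD] at hPc
    have hPdeg' : P.degree < (k : ℕ) := by
      rw [degree_lt_iff_coeff_zero] at hPdeg ⊢
      intro m hm
      rcases hm.eq_or_lt with rfl | h
      · exact hPc
      · exact hPdeg m h
    have hPQ : P = Q := by
      apply Polynomial.eq_of_degrees_lt_of_eval_index_eq (s := Finset.univ) (v := y) hinj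
      · simpa using hPdeg'
      · simpa using hQdeg
      · intro i _
        have := hPev i.succ
        simp only [Fin.cons_succ] at this
        rw [this, hQev]
    apply hz
    have := hPev 0
    simp only [Fin.cons_zero] at this
    rw [IsRoot.def, eval_sub, ← hPQ, this]
    simp

theorem stmt9 (I : Set ℝ) (hIo : IsOpen I) (hIc : I.OrdConnected) (hIne : I.Nonempty)
    (p : ℝ) (hp : p ∈ I) (n k : ℕ) (hkn : k < n) (hpar : Even (n - k)) :
    nIncreasingOn (fun u => (u - p) ^ n) I k ∧
      ¬ nDecreasingOn (fun u => (u - p) ^ n) I k := by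
  refine ⟨fun x hx _ => aux_incr p n k hkn hpar x hx, fun hdec => ?_⟩
  have hinf : I.Infinite := infinite_of_mem_nhds p (hIo.mem_nhds hp)
  obtain ⟨x, hx, hxI, hne⟩ := aux_exists_ne I hinf p n k hkn
  have h1 := aux_incr p n k hkn hpar x hx
  have h2 := hdec x hx hxI
  have h3 : divDiff (fun u => -(u - p) ^ n) k x = -divDiff (fun u => (u - p) ^ n) k x := by
    simp [divDiff, neg_div]
  rw [h3] at h2
  exact hne (by linarith)
end

section
/- Let I ⊆ ℝ be a nonempty open interval, p ∈ I, and n, k ∈ ℕ∪{0} with 0 ≤ k < n and n−k odd. Then the function φ_{p,n}(u) = (u−p)^n is neither k-increasing nor k-decreasing on I. -/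
open MeasureTheory Set

open Polynomial in
/-- There are distinct points to the right of `p` with nonzero divided difference. -/
theorem exists_divDiff_ne_zero (p ε : ℝ) (hε : 0 < ε) (n k : ℕ) (hkn : k < n) :
    ∃ x : Fin (k + 1) → ℝ, Function.Injective x ∧ (∀ j, x j ∈ Ioo p (p + ε)) ∧
      divDiff (fun u => (u - p) ^ n) k x ≠ 0 := by
  have hinf : (Ioo p (p + ε)).Infinite := Ioo_infinite (by linarith)
  let e := hinf.natEmbedding
  let y : Fin k → ℝ := fun i => e i
  have hy : Function.Injective y := fun i j h => by
    have := e.injective (Subtype.ext h)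
    exact Fin.ext this
  have hyI : ∀ i, y i ∈ Ioo p (p + ε) := fun i => (e i).2
  let F : ℝ[X] := (X - C p) ^ n
  let Q : ℝ[X] := Lagrange.interpolate Finset.univ y (fun i => F.eval (y i))
  have hQdeg : Q.degree < k := by
    have h := Lagrange.degree_interpolate_lt (s := Finset.univ)
      (fun i => F.eval (y i)) hy.injOn
    rwa [Finset.card_univ, Fintype.card_fin] at h
  have hQy : ∀ i, Q.eval (y i) = F.eval (y i) := fun i =>
    Lagrange.eval_interpolate_at_node _ hy.injOn (Finset.mem_univ i)
  have hFdeg : F.degree = n := by simp [F]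
  have hR : F - Q ≠ 0 := by
    intro h
    rw [sub_eq_zero] at h
    rw [← h, hFdeg] at hQdeg
    have : n < k := by exact_mod_cast hQdeg
    omega
  obtain ⟨z, hzI, hz⟩ := (hinf.sdiff ((F - Q).roots.toFinset.finite_toSet)).nonempty
  have hz' : (F - Q).eval z ≠ 0 := by
    intro h
    apply hz
    simp only [Finset.mem_coe, Multiset.mem_toFinset]
    exact (mem_roots hR).2 h
  have hzy : ∀ i, y i ≠ z := by
    intro i h
    apply hz'
    rw [← h, eval_sub, hQy, sub_self]
  let x : Fin (k + 1) → ℝ := Fin.cons z y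
  have hx : Function.Injective x := by
    rw [Fin.cons_injective_iff]
    refine ⟨?_, hy⟩
    rintro ⟨i, hi⟩
    exact hzy i hi
  refine ⟨x, hx, ?_, ?_⟩
  · intro j
    refine Fin.cases ?_ ?_ j
    · exact hzI
    · exact hyI
  · have hD : ∑ j : Fin (k + 1), Q.eval (x j) / ∏ i ∈ Finset.univ.erase j, (x j - x i) = 0 := by
      have h := Lagrange.coeff_eq_sum (s := Finset.univ) (v := x) hx.injOn (P := Q)
        (by simpa using hQdeg.trans (by exact_mod_cast Nat.lt_succ_self k))
      rw [← h]
      apply coeff_eq_zero_of_degree_lt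
      simpa using hQdeg
    have hF : divDiff (fun u => (u - p) ^ n) k x =
        ∑ j : Fin (k + 1), F.eval (x j) / ∏ i ∈ Finset.univ.erase j, (x j - x i) := by
      simp [divDiff, F]
    intro hcon
    rw [hF] at hcon
    have hS := sub_eq_zero.2 (hcon.trans hD.symm)
    revert hS
    rw [← Finset.sum_sub_distrib, Fin.sum_univ_succ]
    have h0 : ∀ i : Fin k, F.eval (x i.succ) / ∏ l ∈ Finset.univ.erase i.succ, (x i.succ - x l)
        - Q.eval (x i.succ) / ∏ l ∈ Finset.univ.erase i.succ, (x i.succ - x l) = 0 := by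
      intro i
      have : x i.succ = y i := rfl
      rw [← sub_div, this, hQy, sub_self, zero_div]
    rw [Finset.sum_eq_zero (fun i _ => h0 i), add_zero, ← sub_div]
    refine div_ne_zero ?_ ?_
    · rw [← eval_sub]; exact hz'
    · rw [Finset.prod_ne_zero_iff]
      intro i hi
      rw [sub_ne_zero]
      exact fun h => (Finset.mem_erase.1 hi).1 (hx h).symm

theorem divDiff_reflect (p : ℝ) (n k : ℕ) (hkn : k < n) (hpar : Odd (n - k))
    (x : Fin (k + 1) → ℝ) :
    divDiff (fun u => (u - p) ^ n) k (fun j => 2 * p - x j) =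
      - divDiff (fun u => (u - p) ^ n) k x := by
  unfold divDiff
  rw [← Finset.sum_neg_distrib]
  refine Finset.sum_congr rfl fun j _ => ?_
  have h1 : ∏ i ∈ Finset.univ.erase j, ((2 * p - x j) - (2 * p - x i)) =
      (-1) ^ k * ∏ i ∈ Finset.univ.erase j, (x j - x i) := by
    have : ∀ i ∈ Finset.univ.erase j, (2 * p - x j) - (2 * p - x i) = (-1) * (x j - x i) :=
      fun i _ => by ring
    rw [Finset.prod_congr rfl this, Finset.prod_mul_distrib, Finset.prod_const]
    simp
  have h2 : (2 * p - x j - p) ^ n = (-1) ^ k * (-(x j - p) ^ n) := by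
    have : (2 * p - x j - p) = (-1) * (x j - p) := by ring
    rw [this, mul_pow]
    have h3 : (-1 : ℝ) ^ n = (-1) ^ k * (-1) := by
      conv_lhs => rw [← Nat.add_sub_cancel' hkn.le, pow_add, hpar.neg_one_pow]
    rw [h3]; ring
  simp only [h1, h2]
  rw [mul_div_mul_left _ _ (pow_ne_zero k (by norm_num)), neg_div]

theorem stmt10 (I : Set ℝ) (hIo : IsOpen I) (hIc : I.OrdConnected) (hIne : I.Nonempty)
    (p : ℝ) (hp : p ∈ I) (n k : ℕ) (hkn : k < n) (hpar : Odd (n - k)) :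
    ¬ nIncreasingOn (fun u => (u - p) ^ n) I k ∧
      ¬ nDecreasingOn (fun u => (u - p) ^ n) I k := by
  obtain ⟨ε, hε, hball⟩ := Metric.isOpen_iff.1 hIo p hp
  obtain ⟨x, hx, hxI, hD⟩ := exists_divDiff_ne_zero p ε hε n k hkn
  have hr := divDiff_reflect p n k hkn hpar x
  have hx1 : ∀ j, x j ∈ I := fun j => hball (by
    rw [Real.ball_eq_Ioo]; exact ⟨by linarith [(hxI j).1], (hxI j).2⟩)
  have hx2 : ∀ j, 2 * p - x j ∈ I := fun j => hball (by
    rw [Real.ball_eq_Ioo]; exact ⟨by linarith [(hxI j).2], by linarith [(hxI j).1]⟩)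
  have hxr : Function.Injective (fun j => 2 * p - x j) := fun i j h => hx (by
    simpa using h)
  have hneg : ∀ w : Fin (k + 1) → ℝ, divDiff (fun u => -(u - p) ^ n) k w =
      - divDiff (fun u => (u - p) ^ n) k w := by
    intro w
    simp [divDiff, neg_div]
  constructor
  · intro h
    have a := h x hx hx1
    have b := h _ hxr hx2
    rw [hr] at b
    exact hD (by linarith)
  · intro h
    have a := h x hx hx1
    have b := h _ hxr hx2
    rw [hneg] at a b
    rw [hr] at b
    exact hD (by linarith)
end

section
/- Let I ⊆ ℝ be a nonempty open interval, p ∈ ℝ with sup I ≤ p, and n, k ∈ ℕ∪{0} with 0 ≤ k < n. Then the function (−1)^{n−k} φ_{p,n}, i.e. u ↦ (−1)^{n−k}(u−p)^n, is k-increasing on I but not k-decreasing on I. -/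
open MeasureTheory Set

theorem aux_rec (k n : ℕ) (y : Fin (k + 2) → ℝ) (hy : Function.Injective y) :
    divDiff (fun u => u ^ (n + 1)) (k + 1) y =
      y 0 * divDiff (fun u => u ^ n) (k + 1) y
        + divDiff (fun u => u ^ n) k (fun i => y i.succ) := by
  have key : divDiff (fun u => u ^ (n + 1)) (k + 1) y
      - y 0 * divDiff (fun u => u ^ n) (k + 1) y
      = divDiff (fun u => u ^ n) k (fun i => y i.succ) := by
    unfold divDiff
    rw [Finset.mul_sum, ← Finset.sum_sub_distrib, Fin.sum_univ_succ]
    have h0 : y 0 ^ (n + 1) / ∏ i ∈ Finset.univ.erase 0, (y 0 - y i)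
      - y 0 * (y 0 ^ n / ∏ i ∈ Finset.univ.erase 0, (y 0 - y i)) = 0 := by ring
    rw [h0, zero_add]
    refine Finset.sum_congr rfl fun j _ => ?_
    have hs : (Finset.univ.erase j.succ : Finset (Fin (k + 2)))
        = insert 0 ((Finset.univ.erase j).map (Fin.succEmb (k + 1))) := by
      ext i
      refine Fin.cases ?_ (fun i => ?_) i
      · simp [(Fin.succ_ne_zero j).symm]
      · simp
    have hne : y j.succ - y 0 ≠ 0 := sub_ne_zero.2 (hy.ne (Fin.succ_ne_zero j))
    rw [hs, Finset.prod_insert (by simp), Finset.prod_map]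
    have hP : ∏ i ∈ Finset.univ.erase j, (y j.succ - y i.succ) ≠ 0 :=
      Finset.prod_ne_zero_iff.2 fun i hi => sub_ne_zero.2
        (hy.ne (by simpa using (Finset.ne_of_mem_erase hi).symm))
    simp only [Fin.coe_succEmb]
    field_simp
    ring
  linarith

theorem aux_top (k : ℕ) (y : Fin (k + 1) → ℝ) (hy : Function.Injective y) :
    divDiff (fun u => u ^ k) k y = 1 := by
  have h := Lagrange.leadingCoeff_eq_sum (s := Finset.univ) (v := y) (P := Polynomial.X ^ k)
    hy.injOn (by simp)
  simpa [divDiff] using h.symm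

theorem aux_pos (m k : ℕ) : ∀ y : Fin (k + 1) → ℝ, Function.Injective y → (∀ i, y i < 0) →
    0 < (-1 : ℝ) ^ m * divDiff (fun u => u ^ (k + m)) k y := by
  induction m generalizing k with
  | zero => intro y hy _; simp [aux_top k y hy]
  | succ m ihm =>
    induction k with
    | zero =>
      intro y hy hn
      have : divDiff (fun u => u ^ (0 + (m + 1))) 0 y = y 0 ^ (m + 1) := by simp [divDiff]
      rw [this, ← mul_pow]
      have := hn 0
      exact pow_pos (by linarith) _
    | succ k ihk =>
      intro y hy hn
      have h1 := ihm (k + 1) y hy hn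
      have h2 := ihk (fun i => y i.succ) (hy.comp (Fin.succ_injective _)) (fun i => hn _)
      have hr := aux_rec k (k + 1 + m) y hy
      rw [← add_assoc (k + 1) m 1, hr]
      rw [show k + (m + 1) = k + 1 + m by ring] at h2
      have := mul_pos h1 (neg_pos.2 (hn 0))
      rw [mul_add]
      refine add_pos ?_ h2
      calc _ < _ := this
        _ = _ := by ring

theorem aux_main_s11 (I : Set ℝ) (hIo : IsOpen I)
    (p : ℝ) (hp : p ∈ upperBounds I) (n k : ℕ) (hkn : k < n)
    (x : Fin (k + 1) → ℝ) (hx : Function.Injective x) (hI : ∀ j, x j ∈ I) :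
    0 < divDiff (fun u => (-1 : ℝ) ^ (n - k) * (u - p) ^ n) k x := by
  have hlt : ∀ u ∈ I, u < p := by
    intro u hu
    refine lt_of_le_of_ne (hp hu) ?_
    rintro rfl
    obtain ⟨ε, hε, hb⟩ := Metric.isOpen_iff.1 hIo u hu
    have := hp (hb (show u + ε / 2 ∈ Metric.ball u ε by
      rw [Metric.mem_ball, Real.dist_eq, add_sub_cancel_left, abs_of_pos (by linarith)]; linarith))
    linarith
  have h := aux_pos (n - k) k (fun i => x i - p) (fun a b hab => hx (by simpa using hab))
    (fun i => sub_neg.2 (hlt _ (hI i)))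
  rw [Nat.add_sub_of_le hkn.le] at h
  simpa [divDiff, Finset.mul_sum, mul_div_assoc] using h

theorem stmt11 (I : Set ℝ) (hIo : IsOpen I) (hIc : I.OrdConnected) (hIne : I.Nonempty)
    (p : ℝ) (hp : p ∈ upperBounds I) (n k : ℕ) (hkn : k < n) :
    nIncreasingOn (fun u => (-1 : ℝ) ^ (n - k) * (u - p) ^ n) I k ∧
      ¬ nDecreasingOn (fun u => (-1 : ℝ) ^ (n - k) * (u - p) ^ n) I k := by
  refine ⟨fun x hx hI => (aux_main_s11 I hIo p hp n k hkn x hx hI).le, fun hd => ?_⟩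
  obtain ⟨u, hu⟩ := hIne
  have hinf : I.Infinite := infinite_of_mem_nhds u (hIo.mem_nhds hu)
  let e := hinf.natEmbedding
  have hx : Function.Injective (fun i : Fin (k + 1) => (e i : ℝ)) := fun a b hab =>
    Fin.ext (e.injective (Subtype.ext hab))
  have hI : ∀ i : Fin (k + 1), (e i : ℝ) ∈ I := fun i => (e i).2
  have h1 := aux_main_s11 I hIo p hp n k hkn _ hx hI
  have h2 := hd _ hx hI
  simp only [divDiff, neg_div, Finset.sum_neg_distrib] at h1 h2
  linarith
end

section
/- Let I ⊆ ℝ be a nonempty open interval, p ∈ I, and n, k ∈ ℕ∪{0}. If 0 ≤ k ≤ n+1, then the function φ⁺_{p,n} restricted to I is k-increasing but not k-decreasing on I; if k > n+1, then φ⁺_{p,n} restricted to I is neither k-increasing nor k-decreasing on I. -/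
open MeasureTheory Set

/-- Divided difference over a finite set of nodes. -/
noncomputable def DDs (f : ℝ → ℝ) (S : Finset ℝ) : ℝ :=
  ∑ a ∈ S, f a / ∏ b ∈ S.erase a, (a - b)

lemma divDiff_eq_DDs (f : ℝ → ℝ) (k : ℕ) (x : Fin (k + 1) → ℝ) (hx : Function.Injective x) :
    divDiff f k x = DDs f (Finset.univ.image x) := by
  unfold divDiff DDs
  rw [Finset.sum_image (fun a _ b _ h => hx h)]
  refine Finset.sum_congr rfl fun j _ => ?_
  rw [← Finset.image_erase hx, Finset.prod_image (fun a _ b _ h => hx h)]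

lemma DDs_congr {f g : ℝ → ℝ} {S : Finset ℝ} (h : ∀ a ∈ S, f a = g a) : DDs f S = DDs g S := by
  unfold DDs
  exact Finset.sum_congr rfl fun a ha => by rw [h a ha]

lemma DDs_sub_mul (f : ℝ → ℝ) (S : Finset ℝ) {a : ℝ} (ha : a ∈ S) :
    DDs (fun u => (u - a) * f u) S = DDs f (S.erase a) := by
  unfold DDs
  rw [← Finset.add_sum_erase _ _ ha]
  simp only [sub_self, zero_mul, zero_div, zero_add]
  refine Finset.sum_congr rfl fun u hu => ?_
  have hne : u ≠ a := Finset.ne_of_mem_erase hu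
  have hmem : a ∈ S.erase u := Finset.mem_erase.2 ⟨hne.symm, ha⟩
  rw [← Finset.mul_prod_erase _ _ hmem, Finset.erase_right_comm]
  exact mul_div_mul_left _ _ (sub_ne_zero.2 hne)

lemma DDs_mul (f : ℝ → ℝ) (S : Finset ℝ) (c : ℝ) {a : ℝ} (ha : a ∈ S) :
    DDs (fun u => (u - c) * f u) S = (a - c) * DDs f S + DDs f (S.erase a) := by
  rw [← DDs_sub_mul f S ha]
  unfold DDs
  rw [Finset.mul_sum, ← Finset.sum_add_distrib]
  refine Finset.sum_congr rfl fun u hu => ?_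
  ring

lemma DDs_rec (f : ℝ → ℝ) (S : Finset ℝ) {a b : ℝ} (ha : a ∈ S) (hb : b ∈ S) :
    (a - b) * DDs f S = DDs f (S.erase b) - DDs f (S.erase a) := by
  have h1 := DDs_mul f S 0 ha
  have h2 := DDs_mul f S 0 hb
  linarith

lemma DDs_mul_rec (f : ℝ → ℝ) (S : Finset ℝ) (c : ℝ) {a b : ℝ} (ha : a ∈ S) (hb : b ∈ S) :
    (a - b) * DDs (fun u => (u - c) * f u) S =
      (a - c) * DDs f (S.erase b) + (c - b) * DDs f (S.erase a) := by
  have h1 := DDs_mul f S c ha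
  have h2 := DDs_mul f S c hb
  linear_combination (a - c) * h2 + (c - b) * h1

lemma DDs_singleton (f : ℝ → ℝ) (a : ℝ) : DDs f {a} = f a := by
  simp [DDs]

lemma DDs_one (S : Finset ℝ) (hS : 2 ≤ S.card) : DDs (fun _ => 1) S = 0 := by
  induction hm : S.card using Nat.strong_induction_on generalizing S with
  | _ m ih =>
  obtain ⟨a, ha, b, hb, hab⟩ := Finset.one_lt_card.1 (show 1 < S.card by omega)
  have h := DDs_rec (fun _ => 1) S ha hb
  have ca := Finset.card_erase_of_mem ha
  have cb := Finset.card_erase_of_mem hb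
  have : DDs (fun _ => 1) (S.erase b) - DDs (fun _ => 1) (S.erase a) = 0 := by
    by_cases h2 : S.card = 2
    · obtain ⟨x, hx⟩ := Finset.card_eq_one.1 (show (S.erase a).card = 1 by omega)
      obtain ⟨y, hy⟩ := Finset.card_eq_one.1 (show (S.erase b).card = 1 by omega)
      rw [hx, hy, DDs_singleton, DDs_singleton, sub_self]
    · rw [ih _ (by omega) (S.erase a) (by omega) rfl, ih _ (by omega) (S.erase b) (by omega) rfl,
        sub_self]
  rw [this] at h
  exact (mul_eq_zero.1 h).resolve_left (sub_ne_zero.2 hab)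

lemma DDs_pow_zero (p : ℝ) (n : ℕ) (S : Finset ℝ) (hS : n + 2 ≤ S.card) :
    DDs (fun u => (u - p) ^ n) S = 0 := by
  induction n generalizing S with
  | zero => simpa using DDs_one S hS
  | succ n ih =>
    obtain ⟨a, ha⟩ := Finset.card_pos.1 (show 0 < S.card by omega)
    have ca := Finset.card_erase_of_mem ha
    simp only [pow_succ']
    rw [DDs_mul _ _ _ ha, ih _ (by omega), ih _ (by omega)]
    simp

lemma DDs_pow_nonneg (p : ℝ) (n : ℕ) (S : Finset ℝ) (hS : ∀ u ∈ S, p ≤ u) :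
    0 ≤ DDs (fun u => (u - p) ^ n) S := by
  rcases S.eq_empty_or_nonempty with rfl | hne
  · simp [DDs]
  by_cases h2 : n + 2 ≤ S.card
  · rw [DDs_pow_zero p n S h2]
  induction n generalizing S with
  | zero =>
    have := Finset.card_pos.2 hne
    obtain ⟨x, hx⟩ := Finset.card_eq_one.1 (show S.card = 1 by omega)
    rw [hx, DDs_singleton]; simp
  | succ n ih =>
    obtain ⟨a, ha⟩ := hne
    have key : ∀ T : Finset ℝ, T ⊆ S → 0 ≤ DDs (fun u => (u - p) ^ n) T := by
      intro T hT
      rcases T.eq_empty_or_nonempty with rfl | hne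
      · simp [DDs]
      by_cases h2 : n + 2 ≤ T.card
      · rw [DDs_pow_zero p n T h2]
      exact ih T (fun u hu => hS u (hT hu)) hne h2
    simp only [pow_succ']
    rw [DDs_mul _ _ _ ha]
    have h1 := mul_nonneg (sub_nonneg.2 (hS a ha)) (key S (Finset.Subset.refl _))
    have h3 := key _ (Finset.erase_subset a S)
    linarith

lemma phiPlus_of_lt {p u : ℝ} (n : ℕ) (h : p < u) : phiPlus p n u = (u - p) ^ n := by
  unfold phiPlus
  split_ifs with h0
  · simp [h0]
  · rw [max_eq_right (by linarith)]

lemma phiPlus_of_le {p u : ℝ} (n : ℕ) (h : u ≤ p) : phiPlus p n u = 0 := by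
  unfold phiPlus
  split_ifs with h0 h1
  · linarith
  · rfl
  · rw [max_eq_left (by linarith), zero_pow h0]

lemma phiPlus_nonneg (p : ℝ) (n : ℕ) (u : ℝ) : 0 ≤ phiPlus p n u := by
  rcases lt_or_ge p u with h | h
  · rw [phiPlus_of_lt n h]; exact pow_nonneg (by linarith) _
  · rw [phiPlus_of_le n h]

lemma phiPlus_succ (p : ℝ) (n : ℕ) : phiPlus p (n + 1) = fun u => (u - p) * phiPlus p n u := by
  funext u
  rcases lt_or_ge p u with h | h
  · rw [phiPlus_of_lt _ h, phiPlus_of_lt _ h, pow_succ']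
  · rw [phiPlus_of_le _ h, phiPlus_of_le _ h, mul_zero]

lemma DDs_phi_nonneg (p : ℝ) (n : ℕ) (S : Finset ℝ) (hne : S.Nonempty) (hS : S.card ≤ n + 2) :
    0 ≤ DDs (phiPlus p n) S := by
  induction n generalizing S with
  | zero =>
    by_cases h1 : S.card = 1
    · obtain ⟨x, hx⟩ := Finset.card_eq_one.1 h1
      rw [hx, DDs_singleton]; exact phiPlus_nonneg _ _ _
    · have := Finset.card_pos.2 hne
      obtain ⟨a, b, hab, rfl⟩ := Finset.card_eq_two.1 (show S.card = 2 by omega)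
      have h := DDs_rec (phiPlus p 0) {a, b} (a := a) (b := b) (by simp) (by simp)
      have e1 : ({a, b} : Finset ℝ).erase a = {b} := by
        ext u; simp; grind
      have e2 : ({a, b} : Finset ℝ).erase b = {a} := by
        ext u; simp; grind
      rw [e1, e2, DDs_singleton, DDs_singleton] at h
      have mono : ∀ s t : ℝ, s ≤ t → phiPlus p 0 s ≤ phiPlus p 0 t := by
        intro s t hst
        unfold phiPlus
        simp only [if_true]
        split_ifs <;> linarith
      by_contra hneg
      push Not at hneg
      rcases lt_or_gt_of_ne hab with hlt | hlt
      · have := mono a b hlt.le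
        nlinarith
      · have := mono b a hlt.le
        nlinarith
  | succ n ih =>
    by_cases h1 : S.card = 1
    · obtain ⟨x, hx⟩ := Finset.card_eq_one.1 h1
      rw [hx, DDs_singleton]; exact phiPlus_nonneg _ _ _
    have hpos := Finset.card_pos.2 hne
    set a := S.max' hne with hadef
    set b := S.min' hne with hbdef
    have ha : a ∈ S := S.max'_mem hne
    have hb : b ∈ S := S.min'_mem hne
    have hab : b < a := S.min'_lt_max'_of_card (by omega)
    rcases le_or_gt a p with hap | hap
    · rw [DDs_congr (g := fun _ => 0)]
      · simp [DDs]
      · intro u hu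
        exact phiPlus_of_le _ ((S.le_max' u hu).trans hap)
    rcases le_or_gt p b with hbp | hbp
    · have hall : ∀ u ∈ S, p ≤ u := fun u hu => hbp.trans (S.min'_le u hu)
      rw [DDs_congr (g := fun u => (u - p) ^ (n + 1))]
      · exact DDs_pow_nonneg p _ S hall
      · intro u hu
        rcases (hall u hu).eq_or_lt with h | h
        · rw [phiPlus_of_le _ h.ge, h]; simp
        · exact phiPlus_of_lt _ h
    · have h := DDs_mul_rec (phiPlus p n) S p ha hb
      rw [← phiPlus_succ] at h
      have ca := Finset.card_erase_of_mem ha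
      have cb := Finset.card_erase_of_mem hb
      have i1 := ih (S.erase a) (Finset.card_pos.1 (by omega)) (by omega)
      have i2 := ih (S.erase b) (Finset.card_pos.1 (by omega)) (by omega)
      have : 0 ≤ (a - b) * DDs (phiPlus p (n + 1)) S := by
        rw [h]
        exact add_nonneg (mul_nonneg (by linarith) i2) (mul_nonneg (by linarith) i1)
      exact nonneg_of_mul_nonneg_right this (by linarith)

lemma nInc_DDs {f : ℝ → ℝ} {I : Set ℝ} {k : ℕ} (h : nIncreasingOn f I k) (S : Finset ℝ)
    (hS : S.card = k + 1) (hI : ∀ u ∈ S, u ∈ I) : 0 ≤ DDs f S := by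
  have := h (S.orderEmbOfFin hS) (S.orderEmbOfFin hS).injective
    (fun j => hI _ (S.orderEmbOfFin_mem hS j))
  rw [divDiff_eq_DDs _ _ _ (S.orderEmbOfFin hS).injective] at this
  have e : Finset.univ.image (S.orderEmbOfFin hS) = S := by
    apply Finset.coe_injective
    simp
  rwa [e] at this

/-- Nodes below `p`. -/
noncomputable def leftPts (p ε : ℝ) (m : ℕ) : Finset ℝ :=
  (Finset.range m).image fun j : ℕ => p - ε * (j + 1)

lemma leftPts_inj {p ε : ℝ} (hε : 0 < ε) : Function.Injective fun j : ℕ => p - ε * ((j : ℝ) + 1) := by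
  intro i j h
  have h' : ε * ((i : ℝ) + 1) = ε * ((j : ℝ) + 1) := by
    have : p - ε * ((i : ℝ) + 1) = p - ε * ((j : ℝ) + 1) := h
    linarith
  have := mul_left_cancel₀ hε.ne' h'
  exact_mod_cast add_right_cancel this

lemma leftPts_card {p ε : ℝ} (hε : 0 < ε) (m : ℕ) : (leftPts p ε m).card = m := by
  rw [leftPts, Finset.card_image_of_injective _ (leftPts_inj hε), Finset.card_range]

lemma leftPts_lt {p ε : ℝ} (hε : 0 < ε) {m : ℕ} {u : ℝ} (hu : u ∈ leftPts p ε m) :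
    u < p ∧ p - ε * m ≤ u := by
  obtain ⟨j, hj, rfl⟩ := Finset.mem_image.1 hu
  have hj' : (j : ℝ) + 1 ≤ m := by exact_mod_cast Finset.mem_range.1 hj
  have : 0 < ε * ((j : ℝ) + 1) := by positivity
  constructor
  · linarith
  · nlinarith

lemma leftPts_prod {p ε : ℝ} (hε : 0 < ε) (m : ℕ) (u : ℝ) :
    ∏ t ∈ leftPts p ε m, (u - t) = ∏ j ∈ Finset.range m, (u - p + ε * ((j : ℝ) + 1)) := by
  rw [leftPts, Finset.prod_image (fun a _ b _ h => leftPts_inj hε h)]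
  exact Finset.prod_congr rfl fun j _ => by ring

lemma phi_not_dec (I : Set ℝ) (p δ : ℝ) (hδ : 0 < δ) (hI : ∀ u, p - δ < u → u < p + δ → u ∈ I)
    (n k : ℕ) : ¬ nDecreasingOn (phiPlus p n) I k := by
  intro h
  set ε := δ / (k + 1) with hε
  have hε0 : 0 < ε := by positivity
  have hεk : ε * k < δ := by
    have : ε * (k + 1) = δ := by rw [hε]; field_simp
    linarith
  set a := p + δ / 2 with ha
  have hanot : a ∉ leftPts p ε k := fun hh => by
    have := (leftPts_lt hε0 hh).1
    linarith
  have := nInc_DDs h (insert a (leftPts p ε k))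
    (by rw [Finset.card_insert_of_notMem hanot, leftPts_card hε0]) (by
      intro u hu
      rcases Finset.mem_insert.1 hu with rfl | hu
      · exact hI _ (by linarith) (by linarith)
      · obtain ⟨h1, h2⟩ := leftPts_lt hε0 hu
        exact hI _ (by linarith) (by linarith))
  unfold DDs at this
  rw [Finset.sum_insert hanot, Finset.sum_eq_zero (s := leftPts p ε k), Finset.erase_insert hanot] at this
  · beta_reduce at this
    rw [phiPlus_of_lt _ (by linarith : p < a)] at this
    have hp : 0 < ∏ b ∈ leftPts p ε k, (a - b) :=
      Finset.prod_pos fun b hb => by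
        have := (leftPts_lt hε0 hb).1
        linarith
    have h2 : 0 < (a - p) ^ n := pow_pos (by linarith) _
    have h3 := div_pos h2 hp
    rw [neg_div] at this
    linarith
  · intro u hu
    beta_reduce
    rw [phiPlus_of_le _ (leftPts_lt hε0 hu).1.le]
    simp

lemma phi_not_inc (I : Set ℝ) (p δ : ℝ) (hδ : 0 < δ) (hI : ∀ u, p - δ < u → u < p + δ → u ∈ I)
    (n m : ℕ) (hm : n < m) : ¬ nIncreasingOn (phiPlus p n) I (m + 1) := by
  intro h
  set a := p + δ / 2 with ha
  set a' := p + δ / 4 with ha'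
  let g : ℝ → ℝ → ℝ := fun u ε => (u - p) ^ n / ∏ j ∈ Finset.range m, (u - p + ε * ((j : ℝ) + 1))
  have hc : ∀ u, p < u → ContinuousAt (g u) 0 := by
    intro u hu
    apply ContinuousAt.div
    · fun_prop
    · fun_prop
    · rw [Finset.prod_ne_zero_iff]
      intro j _
      simp only [zero_mul, add_zero]
      linarith
  have h0 : g a 0 < g a' 0 := by
    have e : ∀ u, p < u → g u 0 = ((u - p) ^ (m - n))⁻¹ := by
      intro u hu
      simp only [g, zero_mul, add_zero, Finset.prod_const, Finset.card_range]
      have hne : u - p ≠ 0 := by linarith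
      obtain ⟨d, rfl⟩ := Nat.exists_eq_add_of_lt hm
      rw [show n + d + 1 - n = d + 1 by omega, add_assoc, pow_add]
      field_simp
    rw [e a (by linarith), e a' (by linarith)]
    apply inv_strictAnti₀
    · exact pow_pos (by linarith) _
    · exact pow_lt_pow_left₀ (by linarith) (by linarith) (by omega)
  have hev : ∀ᶠ ε in nhds (0 : ℝ), g a ε < g a' ε :=
    (hc a (by linarith)).eventually_lt (hc a' (by linarith)) h0
  have hev2 : ∀ᶠ ε in nhds (0 : ℝ), ε * m < δ := by
    have : ContinuousAt (fun ε : ℝ => ε * m) 0 := by fun_prop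
    exact this.eventually_lt continuousAt_const (by simpa using hδ)
  obtain ⟨ε, ⟨hg, hεm⟩, hε0⟩ :=
    (((hev.and hev2).filter_mono nhdsWithin_le_nhds).and
      (self_mem_nhdsWithin : Set.Ioi (0 : ℝ) ∈ nhdsWithin 0 (Set.Ioi 0))).exists
  replace hε0 : 0 < ε := hε0
  have hnot : ∀ u, p < u → u ∉ leftPts p ε m := fun u hu hh => by
    have := (leftPts_lt hε0 hh).1
    linarith
  have hn' := hnot a' (by linarith)
  have hn : a ∉ insert a' (leftPts p ε m) := by
    rw [Finset.mem_insert]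
    rintro (hh | hh)
    · linarith
    · exact hnot a (by linarith) hh
  have hp := nInc_DDs h (insert a (insert a' (leftPts p ε m)))
    (by rw [Finset.card_insert_of_notMem hn, Finset.card_insert_of_notMem hn', leftPts_card hε0])
    (by
      intro u hu
      rw [Finset.mem_insert, Finset.mem_insert] at hu
      rcases hu with rfl | rfl | hu
      · exact hI _ (by linarith) (by linarith)
      · exact hI _ (by linarith) (by linarith)
      · obtain ⟨h1, h2⟩ := leftPts_lt hε0 hu
        exact hI _ (by linarith) (by linarith))
  have hr := DDs_rec (phiPlus p n) (insert a (insert a' (leftPts p ε m))) (a := a) (b := a')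
    (by simp) (by simp)
  have key : ∀ u, p < u → DDs (phiPlus p n) (insert u (leftPts p ε m)) = g u ε := by
    intro u hu
    unfold DDs
    rw [Finset.sum_insert (hnot u hu), Finset.sum_eq_zero (s := leftPts p ε m),
      Finset.erase_insert (hnot u hu), phiPlus_of_lt _ hu, leftPts_prod hε0, add_zero]
    intro v hv
    rw [phiPlus_of_le _ (leftPts_lt hε0 hv).1.le, zero_div]
  have hn2 : a' ∉ insert a (leftPts p ε m) := by
    rw [Finset.mem_insert]
    rintro (hh | hh)
    · linarith
    · exact hn' hh
  rw [Finset.erase_insert hn, Finset.insert_comm, Finset.erase_insert hn2, key _ (by linarith),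
    key _ (by linarith), Finset.insert_comm] at hr
  have := mul_nonneg (by linarith : 0 ≤ a - a') hp
  linarith

theorem stmt13 (I : Set ℝ) (hIo : IsOpen I) (hIc : I.OrdConnected) (hIne : I.Nonempty)
    (p : ℝ) (hp : p ∈ I) (n k : ℕ) :
    (k ≤ n + 1 → nIncreasingOn (phiPlus p n) I k ∧ ¬ nDecreasingOn (phiPlus p n) I k) ∧
    (n + 1 < k → ¬ nIncreasingOn (phiPlus p n) I k ∧ ¬ nDecreasingOn (phiPlus p n) I k) := by
  obtain ⟨δ, hδ, hball⟩ := Metric.isOpen_iff.1 hIo p hp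
  have hI : ∀ u, p - δ < u → u < p + δ → u ∈ I := fun u h1 h2 => hball (by
    rw [Real.ball_eq_Ioo]; exact ⟨h1, h2⟩)
  refine ⟨fun hk => ⟨?_, phi_not_dec I p δ hδ hI n k⟩,
    fun hk => ⟨?_, phi_not_dec I p δ hδ hI n k⟩⟩
  · intro x hx _
    rw [divDiff_eq_DDs _ _ _ hx]
    apply DDs_phi_nonneg
    · exact Finset.univ_nonempty.image x
    · rw [Finset.card_image_of_injective _ hx, Finset.card_univ, Fintype.card_fin]
      omega
  · obtain ⟨m, rfl⟩ : ∃ m, k = m + 1 := ⟨k - 1, by omega⟩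
    exact phi_not_inc I p δ hδ hI n m (by omega)
end

section
/- Let I ⊆ ℝ be a nonempty open interval, p ∈ I, and n, k ∈ ℕ∪{0}. If 0 ≤ k ≤ n+1, then the function (−1)^k φ⁻_{p,n} restricted to I is k-increasing but not k-decreasing on I; if k > n+1, then φ⁻_{p,n} restricted to I is neither k-increasing nor k-decreasing on I. -/
open MeasureTheory Set

/-- Divided difference on a finite set of nodes. -/
noncomputable def finDD (f : ℝ → ℝ) (s : Finset ℝ) : ℝ :=
  ∑ x ∈ s, f x / ∏ y ∈ s.erase x, (x - y)

lemma divDiff_eq_finDD (f : ℝ → ℝ) (k : ℕ) (x : Fin (k + 1) → ℝ) (hx : Function.Injective x) :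
    divDiff f k x = finDD f (Finset.univ.image x) := by
  unfold divDiff finDD
  rw [Finset.sum_image (fun a _ b _ h => hx h)]
  refine Finset.sum_congr rfl fun j _ => ?_
  rw [← Finset.image_erase hx, Finset.prod_image (fun a _ b _ h => hx h)]

lemma nInc_iff (f : ℝ → ℝ) (I : Set ℝ) (k : ℕ) :
    nIncreasingOn f I k ↔ ∀ s : Finset ℝ, s.card = k + 1 → (∀ x ∈ s, x ∈ I) → 0 ≤ finDD f s := by
  constructor
  · intro h s hs hI
    have h1 := h (s.orderEmbOfFin hs) (s.orderEmbOfFin hs).injective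
      (fun j => hI _ (s.orderEmbOfFin_mem hs j))
    rw [divDiff_eq_finDD _ _ _ (s.orderEmbOfFin hs).injective, Finset.image_orderEmbOfFin_univ] at h1
    exact h1
  · intro h x hx hI
    rw [divDiff_eq_finDD _ _ _ hx]
    refine h _ ?_ ?_
    · rw [Finset.card_image_of_injective _ hx]; simp
    · intro y hy
      obtain ⟨j, _, rfl⟩ := Finset.mem_image.1 hy
      exact hI j

lemma finDD_const_mul (c : ℝ) (f : ℝ → ℝ) (s : Finset ℝ) :
    finDD (fun u => c * f u) s = c * finDD f s := by
  unfold finDD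
  rw [Finset.mul_sum]
  exact Finset.sum_congr rfl fun x _ => mul_div_assoc _ _ _

lemma finDD_neg (f : ℝ → ℝ) (s : Finset ℝ) :
    finDD (fun u => - f u) s = - finDD f s := by
  have := finDD_const_mul (-1) f s
  simpa using this

lemma finDD_congr {f g : ℝ → ℝ} {s : Finset ℝ} (h : ∀ x ∈ s, f x = g x) :
    finDD f s = finDD g s :=
  Finset.sum_congr rfl fun x hx => by rw [h x hx]

lemma finDD_leibniz (p : ℝ) (g : ℝ → ℝ) (s : Finset ℝ) {a : ℝ} (ha : a ∈ s) :
    finDD (fun u => (p - u) * g u) s = (p - a) * finDD g s - finDD g (s.erase a) := by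
  have h1 : finDD g (s.erase a) = ∑ x ∈ s, (x - a) * g x / ∏ y ∈ s.erase x, (x - y) := by
    rw [← Finset.add_sum_erase _ _ ha]
    simp only [sub_self, zero_mul, zero_div, zero_add]
    unfold finDD
    refine Finset.sum_congr rfl fun x hx => ?_
    have hxa : x ≠ a := Finset.ne_of_mem_erase hx
    have hmem : a ∈ s.erase x := Finset.mem_erase.2 ⟨hxa.symm, ha⟩
    rw [← Finset.mul_prod_erase _ _ hmem, Finset.erase_right_comm,
      mul_div_mul_left _ _ (sub_ne_zero.2 hxa)]
  rw [h1]
  unfold finDD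
  rw [Finset.mul_sum, ← Finset.sum_sub_distrib]
  refine Finset.sum_congr rfl fun x _ => ?_
  ring

lemma finDD_rec (g : ℝ → ℝ) (s : Finset ℝ) {a b : ℝ} (ha : a ∈ s) (hb : b ∈ s) :
    (b - a) * finDD g s = finDD g (s.erase a) - finDD g (s.erase b) := by
  have h1 := finDD_leibniz 0 g s ha
  have h2 := finDD_leibniz 0 g s hb
  linarith

lemma finDD_pow (p : ℝ) (n : ℕ) (s : Finset ℝ) (h : n + 1 < s.card) :
    finDD (fun u => (p - u) ^ n) s = 0 := by
  have hd : ((Polynomial.C p - Polynomial.X) ^ n : Polynomial ℝ).natDegree ≤ n := by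
    refine Polynomial.natDegree_pow_le.trans ?_
    have : (Polynomial.C p - Polynomial.X : Polynomial ℝ).natDegree ≤ 1 := by
      compute_degree
    nlinarith
  have hlt : ((Polynomial.C p - Polynomial.X) ^ n : Polynomial ℝ).degree < s.card :=
    lt_of_le_of_lt Polynomial.degree_le_natDegree (by exact_mod_cast (by omega))
  have h1 := Lagrange.coeff_eq_sum (s := s) (v := id) (Function.injective_id.injOn) hlt
  rw [Polynomial.coeff_eq_zero_of_natDegree_lt (by omega)] at h1
  simpa [finDD] using h1.symm

lemma phi_right {p : ℝ} (n : ℕ) {u : ℝ} (h : p ≤ u) : phiMinus p n u = 0 := by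
  unfold phiMinus
  split_ifs with h1 h2
  · linarith
  · rfl
  · rw [max_eq_left (by linarith), zero_pow h1]

lemma phi_left {p : ℝ} (n : ℕ) {u : ℝ} (h : u < p) : phiMinus p n u = (p - u) ^ n := by
  unfold phiMinus
  split_ifs with h1
  · simp [h1]
  · rw [max_eq_right (by linarith)]

lemma phi_nonneg (p : ℝ) (n : ℕ) (u : ℝ) : 0 ≤ phiMinus p n u := by
  rcases lt_or_ge u p with h | h
  · rw [phi_left n h]; exact pow_nonneg (by linarith) _
  · rw [phi_right n h]

lemma phi_succ (p : ℝ) (n : ℕ) : phiMinus p (n + 1) = fun u => (p - u) * phiMinus p n u := by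
  funext u
  rcases lt_or_ge u p with h | h
  · rw [phi_left _ h, phi_left _ h]; ring
  · rw [phi_right _ h, phi_right _ h]; ring

lemma finDD_right {p : ℝ} (n : ℕ) {s : Finset ℝ} (h : ∀ x ∈ s, p ≤ x) :
    finDD (phiMinus p n) s = 0 :=
  Finset.sum_eq_zero fun x hx => by rw [phi_right n (h x hx), zero_div]

lemma finDD_left {p : ℝ} (n : ℕ) {s : Finset ℝ} (h : ∀ x ∈ s, x < p) (hc : n + 1 < s.card) :
    finDD (phiMinus p n) s = 0 := by
  rw [finDD_congr fun x hx => phi_left n (h x hx), finDD_pow p n s hc]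

lemma finDD_one_left {p : ℝ} (n k : ℕ) {s : Finset ℝ} {a : ℝ} (ha : a ∈ s) (hap : a < p)
    (h : ∀ x ∈ s.erase a, p ≤ x) (hc : s.card = k + 1) :
    0 < (-1) ^ k * finDD (phiMinus p n) s := by
  have h1 : finDD (phiMinus p n) s = (p - a) ^ n / ∏ y ∈ s.erase a, (a - y) := by
    unfold finDD
    rw [Finset.sum_eq_single_of_mem a ha, phi_left n hap]
    intro b hb hba
    rw [phi_right n (h b (Finset.mem_erase.2 ⟨hba, hb⟩)), zero_div]
  have h2 : ∏ y ∈ s.erase a, (a - y) = (-1) ^ k * ∏ y ∈ s.erase a, (y - a) := by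
    have : (s.erase a).card = k := by rw [Finset.card_erase_of_mem ha, hc]; rfl
    rw [← this, ← Finset.prod_const, ← Finset.prod_mul_distrib]
    exact Finset.prod_congr rfl fun y _ => by ring
  have h3 : 0 < ∏ y ∈ s.erase a, (y - a) :=
    Finset.prod_pos fun y hy => by linarith [h y hy]
  have h4 : ((-1 : ℝ) ^ k) ≠ 0 := by simp
  have h6 : (-1 : ℝ) ^ k * ((p - a) ^ n / ((-1) ^ k * ∏ y ∈ s.erase a, (y - a)))
      = (p - a) ^ n / ∏ y ∈ s.erase a, (y - a) := by
    rw [← mul_div_assoc, mul_div_mul_left _ _ h4]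
  rw [h1, h2, h6]
  exact div_pos (pow_pos (by linarith) _) h3

lemma finDD_sign (p : ℝ) (n : ℕ) : ∀ (k : ℕ) (s : Finset ℝ), k ≤ n + 1 → s.card = k + 1 →
    0 ≤ (-1) ^ k * finDD (phiMinus p n) s := by
  have key0 : ∀ (n : ℕ) (s : Finset ℝ), s.card = 0 + 1 →
      0 ≤ (-1) ^ 0 * finDD (phiMinus p n) s := by
    intro n s hs
    obtain ⟨a, rfl⟩ := Finset.card_eq_one.1 hs
    simp [finDD, phi_nonneg]
  induction n with
  | zero =>
    intro k s hk hs
    rcases Nat.eq_zero_or_pos k with rfl | hk0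
    · exact key0 0 s hs
    obtain rfl : k = 1 := by omega
    by_cases hR : ∀ x ∈ s, p ≤ x
    · rw [finDD_right _ hR, mul_zero]
    by_cases hL : ∀ x ∈ s, x < p
    · rw [finDD_left _ hL (by omega), mul_zero]
    push Not at hR hL
    obtain ⟨a, ha, hap⟩ := hR
    obtain ⟨b, hb, hbp⟩ := hL
    refine (finDD_one_left 0 1 ha hap ?_ hs).le
    have h1 : (s.erase a).card = 1 := by rw [Finset.card_erase_of_mem ha, hs]
    have h2 : b ∈ s.erase a := Finset.mem_erase.2 ⟨by rintro rfl; linarith, hb⟩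
    intro x hx
    rwa [Finset.card_le_one.1 h1.le x hx b h2]
  | succ n ih =>
    intro k s hk hs
    rcases k with _ | k
    · exact key0 _ s hs
    by_cases hR : ∀ x ∈ s, p ≤ x
    · rw [finDD_right _ hR, mul_zero]
    push Not at hR
    obtain ⟨a, ha, hap⟩ := hR
    have ea := finDD_leibniz p (phiMinus p n) s ha
    have ia := ih k (s.erase a) (by omega) (by rw [Finset.card_erase_of_mem ha, hs]; rfl)
    by_cases hL : ∀ x ∈ s, x < p
    · rcases Nat.lt_or_ge (n + 1) (k + 1) with h | h
      · rw [finDD_left _ hL (by omega), mul_zero]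
      · have is := ih (k + 1) s h hs
        rw [phi_succ, ea]
        have := mul_nonneg (sub_pos.2 hap).le is
        rw [pow_succ] at this ⊢
        linarith
    push Not at hL
    obtain ⟨b, hb, hbp⟩ := hL
    have ib := ih k (s.erase b) (by omega) (by rw [Finset.card_erase_of_mem hb, hs]; rfl)
    have er := finDD_rec (phiMinus p n) s ha hb
    have hba : 0 < b - a := by linarith
    rw [phi_succ, ea]
    refine nonneg_of_mul_nonneg_right ?_ hba
    have e : (b - a) * ((-1) ^ (k + 1) * ((p - a) * finDD (phiMinus p n) s
        - finDD (phiMinus p n) (s.erase a)))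
        = (b - p) * ((-1) ^ k * finDD (phiMinus p n) (s.erase a))
          + (p - a) * ((-1) ^ k * finDD (phiMinus p n) (s.erase b)) := by
      rw [pow_succ]
      linear_combination (-(-1) ^ k * (p - a)) * er
    rw [e]
    exact add_nonneg (mul_nonneg (by linarith) ia) (mul_nonneg (by linarith) ib)

lemma exists_nodes (I : Set ℝ) (hIo : IsOpen I) (p : ℝ) (hp : p ∈ I) (K : ℕ) :
    ∃ X : ℕ → ℝ, StrictMono X ∧ X K = p ∧ ∀ i ≤ 2 * K, X i ∈ I := by
  obtain ⟨r, hr, hb⟩ := Metric.isOpen_iff.1 hIo p hp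
  have hK : (0 : ℝ) < K + 1 := by positivity
  refine ⟨fun i => p + r / (K + 1) * ((i : ℝ) - K), ?_, by simp, ?_⟩
  · intro i j hij
    have : (i : ℝ) < j := by exact_mod_cast hij
    have hd : 0 < r / ((K : ℝ) + 1) := by positivity
    simp only
    gcongr
  · intro i hi
    apply hb
    have : (i : ℝ) ≤ 2 * K := by exact_mod_cast hi
    have h0 : (0 : ℝ) ≤ i := by positivity
    rw [Metric.mem_ball, Real.dist_eq, add_sub_cancel_left, abs_mul, abs_of_pos (by positivity),
      div_mul_eq_mul_div, div_lt_iff₀ hK]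
    have : |(i : ℝ) - K| ≤ K := abs_le.2 ⟨by linarith, by linarith⟩
    nlinarith

/-- The window of nodes `X i, …, X (i + m - 1)`. -/
noncomputable def win (X : ℕ → ℝ) (i m : ℕ) : Finset ℝ := (Finset.Ico i (i + m)).image X

lemma card_win {X : ℕ → ℝ} (hX : StrictMono X) (i m : ℕ) : (win X i m).card = m := by
  rw [win, Finset.card_image_of_injective _ hX.injective]; simp

lemma mem_win {X : ℕ → ℝ} {i m : ℕ} {x : ℝ} :
    x ∈ win X i m ↔ ∃ j, i ≤ j ∧ j < i + m ∧ X j = x := by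
  simp [win, and_assoc]

lemma win_erase_left {X : ℕ → ℝ} (hX : StrictMono X) (i m : ℕ) :
    (win X i (m + 1)).erase (X i) = win X (i + 1) m := by
  rw [win, win, ← Finset.image_erase hX.injective]
  congr 1
  ext j
  simp only [Finset.mem_erase, Finset.mem_Ico]
  omega

lemma win_erase_right {X : ℕ → ℝ} (hX : StrictMono X) (i m : ℕ) :
    (win X i (m + 1)).erase (X (i + m)) = win X i m := by
  rw [win, win, ← Finset.image_erase hX.injective]
  congr 1
  ext j
  simp only [Finset.mem_erase, Finset.mem_Ico]
  omega

lemma win_one_left {X : ℕ → ℝ} (hX : StrictMono X) (n k m : ℕ) :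
    0 < (-1) ^ m * finDD (phiMinus (X (k + 1)) n) (win X k (m + 1)) := by
  refine finDD_one_left n m (a := X k) (mem_win.2 ⟨k, le_rfl, by omega, rfl⟩)
    (hX (by omega)) ?_ (card_win hX _ _)
  intro x hx
  rw [win_erase_left hX] at hx
  obtain ⟨j, h1, _, rfl⟩ := mem_win.1 hx
  exact hX.monotone h1

lemma no_sign (I : Set ℝ) (hIo : IsOpen I) (p : ℝ) (hp : p ∈ I) (n k : ℕ) (hk : n + 1 < k)
    (ε : ℝ) (hε : ε ≠ 0)
    (h : ∀ s : Finset ℝ, s.card = k + 1 → (∀ x ∈ s, x ∈ I) → 0 ≤ ε * finDD (phiMinus p n) s) :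
    False := by
  obtain ⟨X, hX, hXp, hXI⟩ := exists_nodes I hIo p hp (k + 1)
  have step : ∀ i ≤ k + 1, ε * finDD (phiMinus p n) (win X i k)
      ≤ ε * finDD (phiMinus p n) (win X (i + 1) k) := by
    intro i hi
    have h1 := h (win X i (k + 1)) (card_win hX _ _) (by
      intro x hx
      obtain ⟨j, _, h2, rfl⟩ := mem_win.1 hx
      exact hXI j (by omega))
    have h2 := finDD_rec (phiMinus p n) (win X i (k + 1)) (a := X i) (b := X (i + k))
      (mem_win.2 ⟨i, le_rfl, by omega, rfl⟩) (mem_win.2 ⟨i + k, by omega, by omega, rfl⟩)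
    rw [win_erase_left hX, win_erase_right hX] at h2
    have h3 : X i < X (i + k) := hX (by omega)
    have h4 := mul_nonneg (sub_pos.2 h3).le h1
    have h5 : (X (i + k) - X i) * (ε * finDD (phiMinus p n) (win X i (k + 1)))
      = ε * ((X (i + k) - X i) * finDD (phiMinus p n) (win X i (k + 1))) := by ring
    rw [h5, h2] at h4
    linarith
  have hmono : ∀ d, d + 1 ≤ k + 1 → ε * finDD (phiMinus p n) (win X 1 k)
      ≤ ε * finDD (phiMinus p n) (win X (d + 1) k) := by
    intro d
    induction d with
    | zero => intro _; exact le_rfl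
    | succ d ih => intro hd; exact (ih (by omega)).trans (step _ (by omega))
  have e1 : finDD (phiMinus p n) (win X 1 k) = 0 := by
    refine finDD_left n ?_ (by rw [card_win hX]; exact hk)
    intro x hx
    obtain ⟨j, _, h2, rfl⟩ := mem_win.1 hx
    rw [← hXp]; exact hX (by omega)
  have e2 : finDD (phiMinus p n) (win X (k + 1) k) = 0 := by
    refine finDD_right n ?_
    intro x hx
    obtain ⟨j, h1, h2, rfl⟩ := mem_win.1 hx
    rw [← hXp]; exact hX.monotone h1
  obtain ⟨m, rfl⟩ : ∃ m, k = m + 1 := ⟨k - 1, by omega⟩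
  have a1 := hmono m (by omega)
  have a2 := step (m + 1) (by omega)
  rw [e1, mul_zero] at a1
  rw [e2, mul_zero] at a2
  have a3 := win_one_left hX n (m + 1) m
  rw [hXp] at a3
  rcases mul_eq_zero.1 (le_antisymm a2 a1) with h0 | h0
  · exact hε h0
  · rw [h0, mul_zero] at a3; exact lt_irrefl _ a3

theorem stmt14 (I : Set ℝ) (hIo : IsOpen I) (hIc : I.OrdConnected) (hIne : I.Nonempty)
    (p : ℝ) (hp : p ∈ I) (n k : ℕ) :
    (k ≤ n + 1 →
      nIncreasingOn (fun u => (-1 : ℝ) ^ k * phiMinus p n u) I k ∧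
        ¬ nDecreasingOn (fun u => (-1 : ℝ) ^ k * phiMinus p n u) I k) ∧
    (n + 1 < k →
      ¬ nIncreasingOn (phiMinus p n) I k ∧ ¬ nDecreasingOn (phiMinus p n) I k) := by
  unfold nDecreasingOn
  simp only [nInc_iff, finDD_neg, finDD_const_mul]
  refine ⟨fun hk => ⟨fun s hs _ => finDD_sign p n k s hk hs, fun h => ?_⟩, fun hk => ⟨fun h => ?_,
    fun h => ?_⟩⟩
  · obtain ⟨X, hX, hXp, hXI⟩ := exists_nodes I hIo p hp (k + 1)
    have h1 := h (win X k (k + 1)) (card_win hX _ _) (by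
      intro x hx
      obtain ⟨j, _, h2, rfl⟩ := mem_win.1 hx
      exact hXI j (by omega))
    have h2 := win_one_left hX n k k
    rw [hXp] at h2
    linarith
  · exact no_sign I hIo p hp n k hk 1 one_ne_zero (by simpa using h)
  · exact no_sign I hIo p hp n k hk (-1) (by norm_num) (by simpa using h)
end
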